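/- arXiv:2110.03449 — 3 statements merged into one kernel-verified Lean document; each statement's English description precedes it below -/
import Mathlib

section
/- (Kellogg) Let D be a bounded domain in ℝ^m, m ≥ 2, and let u : closure(D) → ℝ be continuous. If for each x ∈ D there exists a radius r(x) > 0 such that the closure of B_{r(x)}(x) is contained in D and M(x, r(x), u) = u(x), then u is harmonic in D. -/
open MeasureTheory Metric

/-- The spherical mean `M(x, r, u) = (1/ω_m) ∫_{S_1(0)} u(x + r y) dS_y`,
realized as the average of `y ↦ u (x + r • y)` over the unit sphere with respect to
the `(m-1)`-dimensional Hausdorff (surface-area) measure. -/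
noncomputable def sphereMean (m : ℕ) (u : EuclideanSpace ℝ (Fin m) → ℝ)
    (x : EuclideanSpace ℝ (Fin m)) (r : ℝ) : ℝ :=
  ⨍ y in sphere (0 : EuclideanSpace ℝ (Fin m)) 1, u (x + r • y) ∂μH[(m : ℝ) - 1]

/-- The iterated spherical mean
`I(x, r', r, u) = (1/ω_m²) ∫_{S_1(0)} ∫_{S_1(0)} u(x + r' y + r z) dS_z dS_y`. -/
noncomputable def iterSphereMean (m : ℕ) (u : EuclideanSpace ℝ (Fin m) → ℝ)
    (x : EuclideanSpace ℝ (Fin m)) (r' r : ℝ) : ℝ :=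
  ⨍ y in sphere (0 : EuclideanSpace ℝ (Fin m)) 1,
    ⨍ z in sphere (0 : EuclideanSpace ℝ (Fin m)) 1,
      u (x + r' • y + r • z) ∂μH[(m : ℝ) - 1] ∂μH[(m : ℝ) - 1]

/-- The Laplacian `∇²u (x) = ∑ i ∂²u/∂x_i² (x)`. -/
noncomputable def laplacian (m : ℕ) (u : EuclideanSpace ℝ (Fin m) → ℝ)
    (x : EuclideanSpace ℝ (Fin m)) : ℝ :=
  ∑ i : Fin m, fderiv ℝ (fun y => fderiv ℝ u y (EuclideanSpace.single i 1)) x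
    (EuclideanSpace.single i 1)

namespace Kellogg

lemma hausdorff_sphere_lt_top (m : ℕ) (hm : 2 ≤ m) :
    μH[(m : ℝ) - 1] (sphere (0 : EuclideanSpace ℝ (Fin m)) 1) < ⊤ := by
  have hcov : ∀ v : EuclideanSpace ℝ (Fin m), ‖v‖ = 1 →
      μH[(m : ℝ) - 1] (sphere (0 : EuclideanSpace ℝ (Fin m)) 1 ∩ {x | inner ℝ v x ≤ 0}) < ⊤ := by
    intro v hv
    have hfin : Module.finrank ℝ (ℝ ∙ v)ᗮ = m - 1 := by
      haveI : Fact (Module.finrank ℝ (EuclideanSpace ℝ (Fin m)) = (m - 1) + 1) :=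
        ⟨by simp; omega⟩
      exact Submodule.finrank_orthogonal_span_singleton (by rintro rfl; simp at hv)
    have hcast : ((m : ℝ) - 1) = (Module.finrank ℝ (ℝ ∙ v)ᗮ : ℝ) := by
      rw [hfin]; push_cast [Nat.cast_sub (by omega : 1 ≤ m)]; ring
    let F : (ℝ ∙ v)ᗮ → EuclideanSpace ℝ (Fin m) := fun w => stereoInvFunAux v (w : EuclideanSpace ℝ (Fin m))
    have hF : ContDiff ℝ 1 F := contDiff_stereoInvFunAux.comp (ℝ ∙ v)ᗮ.subtypeL.contDiff
    obtain ⟨K, hK⟩ := (hF.locallyLipschitz.locallyLipschitzOn (s := closedBall 0 2)).exists_lipschitzOnWith_of_compact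
      (isCompact_closedBall 0 2)
    have h1 := hK.hausdorffMeasure_image_le (d := (m : ℝ) - 1) (by
      have : (2 : ℝ) ≤ m := by exact_mod_cast hm
      linarith)
    have h2 : sphere (0 : EuclideanSpace ℝ (Fin m)) 1 ∩ {x | inner ℝ v x ≤ 0} ⊆ F '' closedBall 0 2 := by
      rintro x ⟨hx, hx2⟩
      simp only [Set.mem_setOf_eq] at hx2
      refine ⟨stereoToFun v x, ?_, ?_⟩
      · rw [mem_closedBall_zero_iff, stereoToFun_apply, norm_smul]
        have h3 := (ℝ ∙ v)ᗮ.norm_orthogonalProjectionOnto_apply_le x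
        rw [mem_sphere_zero_iff_norm] at hx
        rw [hx] at h3
        simp only [innerSL_apply_apply]
        have h4 : ‖2 / (1 - inner ℝ v x)‖ ≤ 2 := by
          rw [Real.norm_of_nonneg (by apply div_nonneg <;> linarith)]
          rw [div_le_iff₀ (by linarith)]
          linarith
        calc _ ≤ 2 * (1:ℝ) := mul_le_mul h4 h3 (norm_nonneg _) (by norm_num)
          _ = 2 := by norm_num
      · have hne : x ≠ v := by
          rintro rfl
          rw [real_inner_self_eq_norm_sq, hv] at hx2
          norm_num at hx2
        exact congrArg Subtype.val (stereo_left_inv hv (x := ⟨x, hx⟩) hne)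
    refine lt_of_le_of_lt (measure_mono h2) (lt_of_le_of_lt h1 ?_)
    refine ENNReal.mul_lt_top (ENNReal.rpow_lt_top_of_nonneg ?_ (by simp)) ?_
    · have : (2 : ℝ) ≤ m := by exact_mod_cast hm
      linarith
    · rw [hcast]
      exact (isCompact_closedBall _ _).measure_lt_top
  let v : EuclideanSpace ℝ (Fin m) := EuclideanSpace.single ⟨0, by omega⟩ 1
  have hv : ‖v‖ = 1 := by simp [v]
  have := hcov v hv
  have h' := hcov (-v) (by simpa using hv)
  refine lt_of_le_of_lt (measure_mono ?_) (lt_of_le_of_lt (measure_union_le _ _)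
    (ENNReal.add_lt_top.2 ⟨this, h'⟩))
  intro x hx
  rcases le_total (inner ℝ v x) 0 with h | h
  · exact Or.inl ⟨hx, h⟩
  · exact Or.inr ⟨hx, by simpa using h⟩

lemma hausdorff_sphere_pos (m : ℕ) (hm : 2 ≤ m) :
    0 < μH[(m : ℝ) - 1] (sphere (0 : EuclideanSpace ℝ (Fin m)) 1) := by
  let v : EuclideanSpace ℝ (Fin m) := EuclideanSpace.single ⟨0, by omega⟩ 1
  have hv : ‖v‖ = 1 := by simp [v]
  have hfin : Module.finrank ℝ (ℝ ∙ v)ᗮ = m - 1 := by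
    haveI : Fact (Module.finrank ℝ (EuclideanSpace ℝ (Fin m)) = (m - 1) + 1) :=
      ⟨by simp; omega⟩
    exact Submodule.finrank_orthogonal_span_singleton (by intro h; simp [h] at hv)
  have hcast : ((m : ℝ) - 1) = (Module.finrank ℝ (ℝ ∙ v)ᗮ : ℝ) := by
    rw [hfin]; push_cast [Nat.cast_sub (by omega : 1 ≤ m)]; ring
  have h1 := hausdorffMeasure_orthogonalProjectionOnto_le (𝕜 := ℝ) (ℝ ∙ v)ᗮ ((m : ℝ) - 1)
    (sphere (0 : EuclideanSpace ℝ (Fin m)) 1) (by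
      have : (2 : ℝ) ≤ m := by exact_mod_cast hm
      linarith)
  refine lt_of_lt_of_le ?_ h1
  have h2 : ball 0 1 ⊆ (ℝ ∙ v)ᗮ.orthogonalProjectionOnto '' sphere (0 : EuclideanSpace ℝ (Fin m)) 1 := by
    intro w hw
    rw [mem_ball_zero_iff] at hw
    have hwv : inner ℝ (w : EuclideanSpace ℝ (Fin m)) v = 0 := by
      rw [real_inner_comm]
      exact Submodule.mem_orthogonal_singleton_iff_inner_right.1 w.2
    have hnn : 0 ≤ 1 - ‖w‖ ^ 2 := by nlinarith [norm_nonneg w]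
    refine ⟨w + Real.sqrt (1 - ‖w‖ ^ 2) • v, ?_, ?_⟩
    · rw [mem_sphere_zero_iff_norm]
      have : ‖(w : EuclideanSpace ℝ (Fin m)) + Real.sqrt (1 - ‖w‖ ^ 2) • v‖ ^ 2 = 1 := by
        rw [norm_add_sq_real, inner_smul_right, hwv, norm_smul, hv, mul_pow, Real.norm_eq_abs, sq_abs,
          Real.sq_sqrt hnn]
        simp
      have h0 := norm_nonneg ((w : EuclideanSpace ℝ (Fin m)) + Real.sqrt (1 - ‖w‖ ^ 2) • v)
      nlinarith
    · rw [map_add, map_smul]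
      simp
  refine lt_of_lt_of_le ?_ (measure_mono h2)
  rw [hcast]
  exact isOpen_ball.measure_pos _ ⟨0, by simp⟩

/-- normalized surface measure -/
noncomputable def sig (m : ℕ) : Measure (EuclideanSpace ℝ (Fin m)) :=
  ((μH[(m : ℝ) - 1]).restrict (sphere (0 : EuclideanSpace ℝ (Fin m)) 1) Set.univ)⁻¹ •
    (μH[(m : ℝ) - 1]).restrict (sphere (0 : EuclideanSpace ℝ (Fin m)) 1)

lemma sphereMean_eq (m : ℕ) (u : EuclideanSpace ℝ (Fin m) → ℝ)
    (x : EuclideanSpace ℝ (Fin m)) (r : ℝ) : sphereMean m u x r = ∫ y, u (x + r • y) ∂(sig m) := rfl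

lemma sig_prob (m : ℕ) (hm : 2 ≤ m) : IsProbabilityMeasure (sig m) := by
  constructor
  have h1 := hausdorff_sphere_lt_top m hm
  have h2 := hausdorff_sphere_pos m hm
  simp only [sig, Measure.smul_apply, Measure.restrict_apply_univ, smul_eq_mul]
  exact ENNReal.inv_mul_cancel h2.ne' h1.ne

lemma sig_ac (m : ℕ) : (sig m) ≪ (μH[(m : ℝ) - 1]).restrict (sphere (0 : EuclideanSpace ℝ (Fin m)) 1) :=
  Measure.smul_absolutelyContinuous

lemma sig_ae (m : ℕ) : ∀ᵐ y ∂(sig m), ‖y‖ = 1 := by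
  refine (sig_ac m).ae_le ?_
  filter_upwards [ae_restrict_mem (isClosed_sphere (x := (0 : EuclideanSpace ℝ (Fin m))) (ε := 1)).measurableSet] with y hy
  simpa using hy

lemma sig_map (m : ℕ) (L : EuclideanSpace ℝ (Fin m) ≃ₗᵢ[ℝ] EuclideanSpace ℝ (Fin m)) :
    MeasurePreserving L (sig m) (sig m) := by
  refine MeasurePreserving.smul_measure ?_ _
  have h := L.toIsometryEquiv.measurePreserving_hausdorffMeasure ((m : ℝ) - 1)
  have := h.restrict_preimage (isClosed_sphere (x := (0 : EuclideanSpace ℝ (Fin m))) (ε := 1)).measurableSet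
  have h2 : L.toIsometryEquiv ⁻¹' sphere (0 : EuclideanSpace ℝ (Fin m)) 1 = sphere 0 1 := by
    ext x; simp
  rw [h2] at this
  exact this

lemma sig_inv (m : ℕ) (L : EuclideanSpace ℝ (Fin m) ≃ₗᵢ[ℝ] EuclideanSpace ℝ (Fin m))
    (f : EuclideanSpace ℝ (Fin m) → ℝ) : ∫ y, f (L y) ∂(sig m) = ∫ y, f y ∂(sig m) :=
  (sig_map m L).integral_comp L.toHomeomorph.measurableEmbedding f

lemma integrable_of_contOn {m : ℕ} (hm : 2 ≤ m) {f : EuclideanSpace ℝ (Fin m) → ℝ}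
    {x : EuclideanSpace ℝ (Fin m)} {r : ℝ} (hr : 0 ≤ r) (hf : ContinuousOn f (closedBall x r)) :
    Integrable (fun y => f (x + r • y)) (sig m) := by
  haveI := sig_prob m hm
  have hc : ContinuousOn (fun y => f (x + r • y)) (sphere (0 : EuclideanSpace ℝ (Fin m)) 1) := by
    refine hf.comp (by fun_prop) ?_
    intro y hy
    rw [mem_sphere_zero_iff_norm] at hy
    simp [norm_smul, hy, abs_of_nonneg hr]
  obtain ⟨C, hC⟩ := (isCompact_sphere (0 : EuclideanSpace ℝ (Fin m)) 1).exists_bound_of_continuousOn hc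
  refine Integrable.of_bound (C := C) ?_ ?_
  · exact (hc.aestronglyMeasurable isClosed_sphere.measurableSet).mono_ac (sig_ac m)
  · filter_upwards [sig_ae m] with y hy
    exact hC y (by simpa using hy)

lemma integral_inner_sig (m : ℕ) (x : EuclideanSpace ℝ (Fin m)) :
    ∫ y, inner ℝ x y ∂(sig m) = 0 := by
  have h := sig_inv m (LinearIsometryEquiv.neg ℝ) (fun y => inner ℝ x y)
  simp only [LinearIsometryEquiv.coe_neg, inner_neg_right, integral_neg] at h
  linarith

end Kellogg

namespace Kellogg

open MvPolynomial in
/-- polynomial functions on Euclidean space -/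
noncomputable def ev {m : ℕ} (p : MvPolynomial (Fin m) ℝ) (x : EuclideanSpace ℝ (Fin m)) : ℝ :=
  MvPolynomial.eval (fun i => x i) p

lemma ev_add {m : ℕ} (p q : MvPolynomial (Fin m) ℝ) (x) : ev (p + q) x = ev p x + ev q x := by simp [ev]
lemma ev_sub {m : ℕ} (p q : MvPolynomial (Fin m) ℝ) (x) : ev (p - q) x = ev p x - ev q x := by simp [ev]
lemma ev_mul {m : ℕ} (p q : MvPolynomial (Fin m) ℝ) (x) : ev (p * q) x = ev p x * ev q x := by simp [ev]
lemma ev_neg {m : ℕ} (p : MvPolynomial (Fin m) ℝ) (x) : ev (-p) x = - ev p x := by simp [ev]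
lemma ev_C {m : ℕ} (a : ℝ) (x : EuclideanSpace ℝ (Fin m)) : ev (MvPolynomial.C a) x = a := by simp [ev]
lemma ev_X {m : ℕ} (i : Fin m) (x : EuclideanSpace ℝ (Fin m)) : ev (MvPolynomial.X i) x = x i := by simp [ev]
lemma ev_zero {m : ℕ} (x : EuclideanSpace ℝ (Fin m)) : ev (0 : MvPolynomial (Fin m) ℝ) x = 0 := by simp [ev]
lemma ev_sum {m : ℕ} {ι : Type*} (s : Finset ι) (f : ι → MvPolynomial (Fin m) ℝ) (x) :
    ev (∑ i ∈ s, f i) x = ∑ i ∈ s, ev (f i) x := by simp [ev]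

lemma ev_hasFDerivAt {m : ℕ} (p : MvPolynomial (Fin m) ℝ) (x : EuclideanSpace ℝ (Fin m)) :
    HasFDerivAt (ev p) (∑ i, ev (MvPolynomial.pderiv i p) x •
      (EuclideanSpace.proj i : EuclideanSpace ℝ (Fin m) →L[ℝ] ℝ)) x := by
  induction p using MvPolynomial.induction_on with
  | C a =>
    have : ev (MvPolynomial.C a : MvPolynomial (Fin m) ℝ) = fun _ => a := by ext; simp [ev]
    rw [this]
    simpa [ev_zero] using hasFDerivAt_const a x
  | add p q hp hq =>
    have : ev (p + q) = fun x => ev p x + ev q x := by ext; simp [ev]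
    rw [this]
    refine (hp.fun_add hq).congr_fderiv ?_
    simp [ev_add, add_smul, Finset.sum_add_distrib]
  | mul_X p n hp =>
    have : ev (p * MvPolynomial.X n) = fun x => ev p x * x n := by ext; simp [ev]
    rw [this]
    have h2 : HasFDerivAt (fun x : EuclideanSpace ℝ (Fin m) => x n)
      (EuclideanSpace.proj n : EuclideanSpace ℝ (Fin m) →L[ℝ] ℝ) x :=
      (EuclideanSpace.proj n : EuclideanSpace ℝ (Fin m) →L[ℝ] ℝ).hasFDerivAt
    refine (hp.fun_mul h2).congr_fderiv ?_
    ext v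
    simp [ev_add, ev_mul, ev_X, MvPolynomial.pderiv_X, Pi.single_apply, Finset.mul_sum, add_mul,
      Finset.sum_add_distrib, apply_ite, ev, ite_mul, mul_ite]
    apply Finset.sum_congr rfl; intros; ring

lemma ev_contDiff {m : ℕ} (p : MvPolynomial (Fin m) ℝ) : ContDiff ℝ 2 (ev p) := by
  induction p using MvPolynomial.induction_on with
  | C a =>
    have : ev (MvPolynomial.C a : MvPolynomial (Fin m) ℝ) = fun _ => a := by ext; simp [ev]
    rw [this]; exact contDiff_const
  | add p q hp hq =>
    have : ev (p + q) = fun x => ev p x + ev q x := by ext; simp [ev]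
    rw [this]; exact hp.add hq
  | mul_X p n hp =>
    have : ev (p * MvPolynomial.X n) = fun x => ev p x * x n := by ext; simp [ev]
    rw [this]
    exact hp.mul (EuclideanSpace.proj n : EuclideanSpace ℝ (Fin m) →L[ℝ] ℝ).contDiff

@[fun_prop]
lemma ev_continuous {m : ℕ} (p : MvPolynomial (Fin m) ℝ) : Continuous (ev p) :=
  (ev_contDiff p).continuous

lemma ev_curve {m : ℕ} (p : MvPolynomial (Fin m) ℝ) {γ : ℝ → EuclideanSpace ℝ (Fin m)}
    {γ' : EuclideanSpace ℝ (Fin m)} {t : ℝ} (h : HasDerivAt γ γ' t) :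
    HasDerivAt (fun t => ev p (γ t)) (∑ i, ev (MvPolynomial.pderiv i p) (γ t) * γ' i) t := by
  have := (ev_hasFDerivAt p (γ t)).comp_hasDerivAt t h
  refine HasDerivAt.congr_deriv this ?_
  simp

lemma hasDerivAt_sig {m : ℕ} (hm : 2 ≤ m) (Φ Φ' : ℝ → EuclideanSpace ℝ (Fin m) → ℝ)
    (hΦ : Continuous (fun q : ℝ × EuclideanSpace ℝ (Fin m) => Φ q.1 q.2))
    (hΦ' : Continuous (fun q : ℝ × EuclideanSpace ℝ (Fin m) => Φ' q.1 q.2))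
    (hd : ∀ t y, HasDerivAt (fun t => Φ t y) (Φ' t y) t) (t0 : ℝ) :
    HasDerivAt (fun t => ∫ y, Φ t y ∂(sig m)) (∫ y, Φ' t0 y ∂(sig m)) t0 := by
  haveI := sig_prob m hm
  obtain ⟨C, hC⟩ := ((isCompact_closedBall t0 1).prod
    (isCompact_sphere (0 : EuclideanSpace ℝ (Fin m)) 1)).exists_bound_of_continuousOn hΦ'.continuousOn
  have hcont : ∀ t, Continuous (Φ t) := fun t => hΦ.comp (by fun_prop : Continuous fun y => (t, y))
  have hcont' : ∀ t, Continuous (Φ' t) := fun t => hΦ'.comp (by fun_prop : Continuous fun y => (t, y))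
  refine (hasDerivAt_integral_of_dominated_loc_of_deriv_le (s := ball t0 1) (bound := fun _ => C)
    (ball_mem_nhds t0 one_pos) ?_ ?_ ?_ ?_ ?_ ?_).2
  · exact Filter.Eventually.of_forall fun t => (hcont t).aestronglyMeasurable
  · simpa using integrable_of_contOn hm (x := 0) (r := 1) zero_le_one (hcont t0).continuousOn
  · exact (hcont' t0).aestronglyMeasurable
  · filter_upwards [sig_ae m] with y hy t ht
    exact hC (t, y) ⟨ball_subset_closedBall ht, by simpa using hy⟩
  · exact integrable_const _
  · exact Filter.Eventually.of_forall fun y t _ => hd t y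

lemma rot_exists {m : ℕ} (i j : Fin m) (hij : i ≠ j) (θ : ℝ) :
    ∃ L : EuclideanSpace ℝ (Fin m) ≃ₗᵢ[ℝ] EuclideanSpace ℝ (Fin m), ∀ y, L y =
      y + ((Real.cos θ - 1) * y i - Real.sin θ * y j) • EuclideanSpace.single i (1:ℝ) +
        (Real.sin θ * y i + (Real.cos θ - 1) * y j) • EuclideanSpace.single j (1:ℝ) := by
  let A : EuclideanSpace ℝ (Fin m) →ₗ[ℝ] EuclideanSpace ℝ (Fin m) :=
    { toFun := fun y => y + ((Real.cos θ - 1) * y i - Real.sin θ * y j) • EuclideanSpace.single i (1:ℝ) +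
        (Real.sin θ * y i + (Real.cos θ - 1) * y j) • EuclideanSpace.single j (1:ℝ)
      map_add' := by
        intro a b
        simp only [PiLp.add_apply]
        module
      map_smul' := by
        intro a b
        simp only [PiLp.smul_apply, smul_eq_mul, RingHom.id_apply]
        module }
  have hA : ∀ y, ‖A y‖ = ‖y‖ := by
    intro y
    have : ‖A y‖ ^ 2 = ‖y‖ ^ 2 := by
      change ‖y + ((Real.cos θ - 1) * y i - Real.sin θ * y j) • EuclideanSpace.single i (1:ℝ) +
        (Real.sin θ * y i + (Real.cos θ - 1) * y j) • EuclideanSpace.single j (1:ℝ)‖ ^ 2 = _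
      rw [norm_add_sq_real, norm_add_sq_real]
      simp only [inner_smul_right, inner_add_left, inner_smul_left, norm_smul, mul_pow,
        EuclideanSpace.inner_single_right, EuclideanSpace.norm_single, Real.norm_eq_abs, sq_abs]
      simp [hij, hij.symm]
      linear_combination (y i ^ 2 + y j ^ 2) * (Real.sin_sq_add_cos_sq θ)
    exact (sq_eq_sq₀ (norm_nonneg _) (norm_nonneg _)).1 this
  exact ⟨LinearIsometry.toLinearIsometryEquiv ⟨A, hA⟩ rfl, fun y => rfl⟩

lemma rot_identity {m : ℕ} (hm : 2 ≤ m) (F : MvPolynomial (Fin m) ℝ) (x : EuclideanSpace ℝ (Fin m))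
    {r : ℝ} (hr : r ≠ 0) (i j : Fin m) (hij : i ≠ j) :
    ∫ y, (y i * ev (MvPolynomial.pderiv j F) (x + r • y) -
      y j * ev (MvPolynomial.pderiv i F) (x + r • y)) ∂(sig m) = 0 := by
  let ρ : ℝ → EuclideanSpace ℝ (Fin m) → EuclideanSpace ℝ (Fin m) := fun θ y =>
    y + ((Real.cos θ - 1) * y i - Real.sin θ * y j) • EuclideanSpace.single i (1:ℝ) +
        (Real.sin θ * y i + (Real.cos θ - 1) * y j) • EuclideanSpace.single j (1:ℝ)
  let ρ' : ℝ → EuclideanSpace ℝ (Fin m) → EuclideanSpace ℝ (Fin m) := fun θ y =>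
    (- Real.sin θ * y i - Real.cos θ * y j) • EuclideanSpace.single i (1:ℝ) +
        (Real.cos θ * y i - Real.sin θ * y j) • EuclideanSpace.single j (1:ℝ)
  have hρ : ∀ θ y, HasDerivAt (fun θ => ρ θ y) (ρ' θ y) θ := by
    intro θ y
    have h1 : HasDerivAt (fun θ => (Real.cos θ - 1) * y i - Real.sin θ * y j)
        (- Real.sin θ * y i - Real.cos θ * y j) θ :=
      (((Real.hasDerivAt_cos θ).sub_const 1).mul_const _).sub ((Real.hasDerivAt_sin θ).mul_const _)
    have h2 : HasDerivAt (fun θ => Real.sin θ * y i + (Real.cos θ - 1) * y j)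
        (Real.cos θ * y i - Real.sin θ * y j) θ := by
      refine (((Real.hasDerivAt_sin θ).mul_const (y i)).fun_add
        (((Real.hasDerivAt_cos θ).sub_const 1).mul_const (y j))).congr_deriv ?_
      ring
    exact ((h1.smul_const (EuclideanSpace.single i (1:ℝ))).const_add y).fun_add
      (h2.smul_const (EuclideanSpace.single j (1:ℝ)))
  have hcρ : Continuous (fun q : ℝ × EuclideanSpace ℝ (Fin m) => ρ q.1 q.2) := by
    simp only [ρ]; fun_prop
  have hcρ' : Continuous (fun q : ℝ × EuclideanSpace ℝ (Fin m) => ρ' q.1 q.2) := by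
    simp only [ρ']; fun_prop
  have key := hasDerivAt_sig hm (fun θ y => ev F (x + r • ρ θ y))
    (fun θ y => ∑ k, ev (MvPolynomial.pderiv k F) (x + r • ρ θ y) * (r • ρ' θ y) k)
    (by fun_prop) (by fun_prop)
    (fun θ y => ev_curve F (((hρ θ y).const_smul r).const_add x)) 0
  have hconst : (fun θ => ∫ y, ev F (x + r • ρ θ y) ∂(sig m)) =
      fun _ => ∫ y, ev F (x + r • y) ∂(sig m) := by
    funext θ
    obtain ⟨L, hL⟩ := rot_exists i j hij θ
    rw [← sig_inv m L (fun y => ev F (x + r • y))]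
    simp only [hL, ρ]
  rw [hconst] at key
  have h0 := key.unique (hasDerivAt_const 0 _)
  have h1 : ∀ y, ∑ k, ev (MvPolynomial.pderiv k F) (x + r • ρ 0 y) * (r • ρ' 0 y) k =
      r * (y i * ev (MvPolynomial.pderiv j F) (x + r • y) -
      y j * ev (MvPolynomial.pderiv i F) (x + r • y)) := by
    intro y
    have e0 : ρ 0 y = y := by simp [ρ]
    rw [e0]
    simp [ρ', Pi.single_apply, mul_add, Finset.sum_add_distrib]
    ring
  simp only [h1, integral_const_mul] at h0
  exact (mul_eq_zero.1 h0).resolve_left hr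

lemma div_identity {m : ℕ} (hm : 2 ≤ m) (g : MvPolynomial (Fin m) ℝ) (x : EuclideanSpace ℝ (Fin m))
    {r : ℝ} (hr : r ≠ 0) (j : Fin m) :
    r * ∫ y, ev (MvPolynomial.pderiv j g) (x + r • y) ∂(sig m) =
     ∫ y, y j * (((m:ℝ) - 1) * ev g (x + r • y) + r * ∑ i, y i * ev (MvPolynomial.pderiv i g) (x + r • y)) ∂(sig m) := by
  have hintg : ∀ f : EuclideanSpace ℝ (Fin m) → ℝ, Continuous f → Integrable f (sig m) := by
    intro f hf
    simpa using integrable_of_contOn hm (x := 0) (r := 1) zero_le_one hf.continuousOn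
  let G : Fin m → EuclideanSpace ℝ (Fin m) → ℝ := fun i y =>
    y i * (r * y i * ev (MvPolynomial.pderiv j g) (x + r • y)) -
      y j * ((if i = j then 0 else ev g (x + r • y)) + r * y i * ev (MvPolynomial.pderiv i g) (x + r • y))
  have hG : ∀ i, ∫ y, G i y ∂(sig m) = 0 := by
    intro i
    by_cases hij : i = j
    · subst hij
      rw [← integral_zero (EuclideanSpace ℝ (Fin m)) ℝ (μ := sig m)]
      congr 1; funext y; simp [G]
    · rw [← rot_identity hm ((MvPolynomial.X i - MvPolynomial.C (x i)) * g) x hr i j hij]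
      congr 1; funext y
      have hne : j ≠ i := fun h => hij h.symm
      simp [G, hij, MvPolynomial.pderiv_X, Pi.single_apply, ev_add, ev_mul, ev_sub, ev_X, ev_C, hne, ev_zero]
      left; ring
  have hs : ∫ y, ∑ i, G i y ∂(sig m) = 0 := by
    rw [integral_finset_sum]
    · simp [hG]
    · intro i _
      apply hintg
      simp only [G]
      split_ifs <;> fun_prop
  rw [← integral_const_mul, ← sub_eq_zero, ← integral_sub (hintg _ (by fun_prop)) (hintg _ (by fun_prop)), ← hs]
  apply integral_congr_ae
  filter_upwards [sig_ae m] with y hy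
  have hy2 : ∑ i, y i ^ 2 = 1 := by
    rw [← EuclideanSpace.real_norm_sq_eq, hy]; norm_num
  have e1 : ∑ i, y i * (r * y i * ev (MvPolynomial.pderiv j g) (x + r • y)) =
      r * ev (MvPolynomial.pderiv j g) (x + r • y) := by
    calc _ = (∑ i, y i ^ 2) * (r * ev (MvPolynomial.pderiv j g) (x + r • y)) := by
          rw [Finset.sum_mul]; apply Finset.sum_congr rfl; intros; ring
      _ = _ := by rw [hy2]; ring
  have e2 : ∑ i : Fin m, (if i = j then 0 else ev g (x + r • y)) = ((m:ℝ) - 1) * ev g (x + r • y) := by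
    have : ∀ i : Fin m, (if i = j then 0 else ev g (x + r • y)) = ev g (x + r • y) - (if i = j then ev g (x + r • y) else 0) := by
      intro i; split_ifs <;> simp
    simp only [this, Finset.sum_sub_distrib]
    simp
    ring
  simp only [G, Finset.sum_sub_distrib, e1, ← Finset.mul_sum, Finset.sum_add_distrib, e2]
  congr 2
  congr 1
  rw [Finset.mul_sum]
  apply Finset.sum_congr rfl; intros; ring

/-- Laplacian on polynomials -/
noncomputable def Lap {m : ℕ} (p : MvPolynomial (Fin m) ℝ) : MvPolynomial (Fin m) ℝ :=
  ∑ i, MvPolynomial.pderiv i (MvPolynomial.pderiv i p)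

lemma green {m : ℕ} (hm : 2 ≤ m) (p : MvPolynomial (Fin m) ℝ) (x : EuclideanSpace ℝ (Fin m))
    {R : ℝ} (hR : 0 < R) (h : ∀ ρ, 0 < ρ → ρ < R → 0 ≤ ∫ y, ev (Lap p) (x + ρ • y) ∂(sig m)) :
    ev p x ≤ ∫ y, ev p (x + R • y) ∂(sig m) := by
  haveI := sig_prob m hm
  have hintg : ∀ f : EuclideanSpace ℝ (Fin m) → ℝ, Continuous f → Integrable f (sig m) := by
    intro f hf
    simpa using integrable_of_contOn hm (x := 0) (r := 1) zero_le_one hf.continuousOn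
  have hγ : ∀ (t : ℝ) (y : EuclideanSpace ℝ (Fin m)), HasDerivAt (fun t : ℝ => x + t • y) y t := by
    intro t y
    simpa using ((hasDerivAt_id t).smul_const y).const_add x
  let φ : ℝ → ℝ := fun r => ∫ y, ev p (x + r • y) ∂(sig m)
  let φ1 : ℝ → ℝ := fun r => ∫ y, ∑ i, ev (MvPolynomial.pderiv i p) (x + r • y) * y i ∂(sig m)
  let φ2 : ℝ → ℝ := fun r => ∫ y, ∑ i, (∑ k, ev (MvPolynomial.pderiv k (MvPolynomial.pderiv i p)) (x + r • y) * y k) * y i ∂(sig m)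
  have hφ : ∀ r, HasDerivAt φ (φ1 r) r := by
    intro r
    refine hasDerivAt_sig hm (fun r y => ev p (x + r • y))
      (fun r y => ∑ i, ev (MvPolynomial.pderiv i p) (x + r • y) * y i) (by fun_prop) (by fun_prop)
      (fun t y => ev_curve p (hγ t y)) r
  have hφ1 : ∀ r, HasDerivAt φ1 (φ2 r) r := by
    intro r
    refine hasDerivAt_sig hm (fun r y => ∑ i, ev (MvPolynomial.pderiv i p) (x + r • y) * y i)
      (fun r y => ∑ i, (∑ k, ev (MvPolynomial.pderiv k (MvPolynomial.pderiv i p)) (x + r • y) * y k) * y i)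
      (by fun_prop) (by fun_prop) (fun t y => ?_) r
    exact HasDerivAt.fun_sum fun i _ => (ev_curve (MvPolynomial.pderiv i p) (hγ t y)).mul_const (y i)
  have hode : ∀ r, r ≠ 0 → r * ∫ y, ev (Lap p) (x + r • y) ∂(sig m) = ((m:ℝ)-1) * φ1 r + r * φ2 r := by
    intro r hr
    simp only [Lap, ev_sum]
    rw [integral_finset_sum _ (fun i _ => hintg _ (by fun_prop)), Finset.mul_sum]
    simp only [div_identity hm _ x hr, φ1, φ2]
    rw [← integral_finset_sum _ (fun i _ => hintg _ (by fun_prop)), ← integral_const_mul, ← integral_const_mul,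
      ← integral_add (hintg _ (by fun_prop)) (hintg _ (by fun_prop))]
    congr 1; funext y
    rw [Finset.mul_sum, Finset.mul_sum, ← Finset.sum_add_distrib]
    apply Finset.sum_congr rfl
    intro i _
    have : ∑ k, ev (MvPolynomial.pderiv k (MvPolynomial.pderiv i p)) (x + r • y) * y k =
      ∑ k, y k * ev (MvPolynomial.pderiv k (MvPolynomial.pderiv i p)) (x + r • y) := by
      apply Finset.sum_congr rfl; intros; ring
    rw [this]; ring
  obtain ⟨n, rfl⟩ : ∃ n, m = n + 2 := ⟨m - 2, by omega⟩
  let ψ : ℝ → ℝ := fun r => r ^ (n + 1) * φ1 r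
  have hψ : ∀ r, HasDerivAt ψ ((n + 1 : ℝ) * r ^ n * φ1 r + r ^ (n+1) * φ2 r) r := by
    intro r
    refine ((hasDerivAt_pow (n+1) r).fun_mul (hφ1 r)).congr_deriv ?_
    simp
  have hψmono : MonotoneOn ψ (Set.Icc 0 R) := by
    apply monotoneOn_of_deriv_nonneg (convex_Icc 0 R)
    · exact fun r _ => (hψ r).continuousAt.continuousWithinAt
    · exact fun r _ => (hψ r).differentiableAt.differentiableWithinAt
    · intro r hr
      rw [interior_Icc] at hr
      rw [(hψ r).deriv]
      have h1 := hode r hr.1.ne'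
      have h2 := h r hr.1 hr.2
      have h3 : (n + 1 : ℝ) * r ^ n * φ1 r + r ^ (n+1) * φ2 r =
        r ^ n * (r * ∫ y, ev (Lap p) (x + r • y) ∂(sig (n+2))) := by
        rw [h1]; push_cast; ring
      rw [h3]
      have := hr.1
      positivity
  have hφmono : MonotoneOn φ (Set.Icc 0 R) := by
    apply monotoneOn_of_deriv_nonneg (convex_Icc 0 R)
    · exact fun r _ => (hφ r).continuousAt.continuousWithinAt
    · exact fun r _ => (hφ r).differentiableAt.differentiableWithinAt
    · intro r hr
      rw [interior_Icc] at hr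
      rw [(hφ r).deriv]
      have h1 := hψmono (Set.left_mem_Icc.2 hR.le) ⟨hr.1.le, hr.2.le⟩ hr.1.le
      simp only [ψ, ne_eq, Nat.add_eq_zero_iff, one_ne_zero, and_false, not_false_eq_true, zero_pow, zero_mul] at h1
      exact nonneg_of_mul_nonneg_right h1 (pow_pos hr.1 _)
  have := hφmono (Set.left_mem_Icc.2 hR.le) (Set.right_mem_Icc.2 hR.le) hR.le
  simpa [φ] using this

end Kellogg

namespace Kellogg

lemma max_principle {m : ℕ} (hm : 2 ≤ m) {Ω : Set (EuclideanSpace ℝ (Fin m))} (ho : IsOpen Ω)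
    (hb : Bornology.IsBounded Ω) {w : EuclideanSpace ℝ (Fin m) → ℝ} {c : ℝ}
    (husc : UpperSemicontinuousOn w (closure Ω))
    (hbd : ∀ x ∈ frontier Ω, w x ≤ c)
    (hsub : ∀ x ∈ Ω, ∃ r > 0, closedBall x r ⊆ Ω ∧ Integrable (fun y => w (x + r • y)) (sig m) ∧
      w x ≤ ∫ y, w (x + r • y) ∂(sig m)) :
    ∀ x ∈ closure Ω, w x ≤ c := by
  haveI := sig_prob m hm
  intro x0 hx0
  by_contra hlt
  push Not at hlt
  have hK : IsCompact (closure Ω) := hb.isCompact_closure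
  obtain ⟨a, haK, ha⟩ := husc.exists_isMaxOn ⟨x0, hx0⟩ hK
  have hac : c < w a := lt_of_lt_of_le hlt (ha hx0)
  have hcomp : IsCompact (closure Ω ∩ w ⁻¹' Set.Ici (w a)) :=
    husc.isCompact_inter_preimage_Ici hK (w a)
  obtain ⟨b, hbK, hbmax⟩ := hcomp.exists_isMaxOn ⟨a, haK, by simp⟩ (continuous_norm (E := EuclideanSpace ℝ (Fin m))).continuousOn
  have hbw : w a ≤ w b := hbK.2
  have hbΩ : b ∈ Ω := by
    by_contra hn
    have : b ∈ frontier Ω := by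
      rw [ho.frontier_eq]; exact ⟨hbK.1, hn⟩
    have := hbd b this
    linarith
  obtain ⟨r, hr, hball, hintg, hmean⟩ := hsub b hbΩ
  have hmem : ∀ y : EuclideanSpace ℝ (Fin m), ‖y‖ = 1 → b + r • y ∈ closure Ω := by
    intro y hy
    apply subset_closure
    apply hball
    simp [norm_smul, hy, abs_of_pos hr]
  have hle : ∀ᵐ y ∂(sig m), w (b + r • y) ≤ w a := by
    filter_upwards [sig_ae m] with y hy
    exact ha (hmem y hy)
  have hzero : ∫ y, (w a - w (b + r • y)) ∂(sig m) = 0 := by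
    apply le_antisymm
    · rw [integral_sub (integrable_const _) hintg]
      simp
      linarith
    · apply integral_nonneg_of_ae
      filter_upwards [hle] with y hy
      simpa using hy
  have hI : Integrable (fun y => w a - w (b + r • y)) (sig m) := (integrable_const _).sub hintg
  have hzero' := (integral_eq_zero_iff_of_nonneg_ae (by
    filter_upwards [hle] with y hy
    simpa using hy) hI).1 hzero
  have hin : ∀ᵐ y ∂(sig m), r + 2 * inner ℝ b y ≤ 0 := by
    filter_upwards [hzero', sig_ae m] with y hy hy1
    have h1 : ‖b + r • y‖ ≤ ‖b‖ := hbmax ⟨hmem y hy1, by simp at hy; simp; linarith⟩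
    have h2 : ‖b + r • y‖ ^ 2 ≤ ‖b‖ ^ 2 := pow_le_pow_left₀ (norm_nonneg _) h1 2
    rw [norm_add_sq_real, inner_smul_right, norm_smul, hy1, Real.norm_of_nonneg hr.le] at h2
    have h3 : r * (r + 2 * inner ℝ b y) ≤ 0 := by linarith
    by_contra h4
    push Not at h4
    nlinarith
  have hii : Integrable (fun y : EuclideanSpace ℝ (Fin m) => r + 2 * inner ℝ b y) (sig m) := by
    have hc : Continuous (fun y : EuclideanSpace ℝ (Fin m) => r + 2 * inner ℝ b y) := by fun_prop
    simpa using integrable_of_contOn hm (x := 0) (r := 1) zero_le_one hc.continuousOn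
  have hii2 : Integrable (fun y : EuclideanSpace ℝ (Fin m) => 2 * inner ℝ b y) (sig m) := by
    have hc : Continuous (fun y : EuclideanSpace ℝ (Fin m) => 2 * inner ℝ b y) := by fun_prop
    simpa using integrable_of_contOn hm (x := 0) (r := 1) zero_le_one hc.continuousOn
  have := integral_nonpos_of_ae hin
  rw [integral_add (integrable_const _) hii2, integral_const_mul, integral_inner_sig] at this
  simp at this
  linarith

lemma stone_weierstrass {m : ℕ} {K : Set (EuclideanSpace ℝ (Fin m))} (hK : IsCompact K)
    {f : EuclideanSpace ℝ (Fin m) → ℝ} (hf : ContinuousOn f K) {ε : ℝ} (hε : 0 < ε) :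
    ∃ p : MvPolynomial (Fin m) ℝ, ∀ x ∈ K, |ev p x - f x| < ε := by
  haveI : CompactSpace K := isCompact_iff_compactSpace.mp hK
  let X : Fin m → C(K, ℝ) := fun i => ⟨fun x => (x : EuclideanSpace ℝ (Fin m)) i, by fun_prop⟩
  let A : MvPolynomial (Fin m) ℝ →ₐ[ℝ] C(K, ℝ) := MvPolynomial.aeval X
  have hA : ∀ p (x : K), A p x = ev p x := by
    intro p x
    induction p using MvPolynomial.induction_on with
    | C a => simp [A, ev_C]
    | add p q hp hq => simp [ev_add, hp, hq]
    | mul_X p n hp => simp [ev_mul, ev_X, hp]; simp [A, X]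
  have hsep : A.range.SeparatesPoints := by
    intro x y hxy
    obtain ⟨i, hi⟩ : ∃ i, (x : EuclideanSpace ℝ (Fin m)) i ≠ (y : EuclideanSpace ℝ (Fin m)) i := by
      by_contra h
      push Not at h
      exact hxy (Subtype.ext (PiLp.ext h))
    refine ⟨A (MvPolynomial.X i), ⟨A (MvPolynomial.X i), ⟨_, rfl⟩, rfl⟩, ?_⟩
    simpa [hA, ev_X] using hi
  obtain ⟨⟨g, p, rfl⟩, hg⟩ := ContinuousMap.exists_mem_subalgebra_near_continuous_of_separatesPoints
    A.range hsep (fun x : K => f x) hf.domRestrict ε hε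
  refine ⟨p, fun x hx => ?_⟩
  have := hg ⟨x, hx⟩
  rw [← hA p ⟨x, hx⟩]
  exact this

/-- the Laplacian as a linear map -/
noncomputable def LapL (m : ℕ) : MvPolynomial (Fin m) ℝ →ₗ[ℝ] MvPolynomial (Fin m) ℝ :=
  ∑ i, (MvPolynomial.pderiv i).toLinearMap ∘ₗ (MvPolynomial.pderiv i).toLinearMap

lemma LapL_apply {m : ℕ} (p : MvPolynomial (Fin m) ℝ) : LapL m p = Lap p := by
  simp [LapL, Lap]

lemma Lap_sub {m : ℕ} (p q : MvPolynomial (Fin m) ℝ) : Lap (p - q) = Lap p - Lap q := by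
  simp [← LapL_apply]
lemma Lap_add {m : ℕ} (p q : MvPolynomial (Fin m) ℝ) : Lap (p + q) = Lap p + Lap q := by
  simp [← LapL_apply]
lemma Lap_neg {m : ℕ} (p : MvPolynomial (Fin m) ℝ) : Lap (-p) = - Lap p := by
  simp [← LapL_apply]

lemma totalDegree_pderiv {m : ℕ} (p : MvPolynomial (Fin m) ℝ) (i : Fin m) {n : ℕ}
    (h : p.totalDegree ≤ n + 1) : (MvPolynomial.pderiv i p).totalDegree ≤ n := by
  rw [MvPolynomial.totalDegree]
  refine Finset.sup_le ?_
  intro s hs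
  rw [MvPolynomial.mem_support_iff, MvPolynomial.coeff_pderiv] at hs
  have h1 : s + Finsupp.single i 1 ∈ p.support := by
    rw [MvPolynomial.mem_support_iff]
    exact left_ne_zero_of_mul hs
  have h2 := MvPolynomial.le_totalDegree h1
  have h3 : (s + Finsupp.single i 1).sum (fun _ e => e) = s.sum (fun _ e => e) + 1 := by
    rw [Finsupp.sum_add_index' (by simp) (by simp)]
    simp
  omega

lemma pderiv_comm' {m : ℕ} (i j : Fin m) (p : MvPolynomial (Fin m) ℝ) :
    MvPolynomial.pderiv i (MvPolynomial.pderiv j p) = MvPolynomial.pderiv j (MvPolynomial.pderiv i p) := by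
  induction p using MvPolynomial.induction_on with
  | C a => simp
  | add p q hp hq => simp [hp, hq]
  | mul_X p n hp =>
    simp only [Derivation.leibniz, smul_eq_mul, map_add, hp, MvPolynomial.pderiv_X, Pi.single_apply]
    split_ifs <;> simp <;> ring

lemma Lap_pderiv {m : ℕ} (i : Fin m) (p : MvPolynomial (Fin m) ℝ) :
    Lap (MvPolynomial.pderiv i p) = MvPolynomial.pderiv i (Lap p) := by
  simp only [Lap, map_sum]
  apply Finset.sum_congr rfl
  intro j _
  rw [pderiv_comm' j i, pderiv_comm' j i]

lemma harm_mvp {m : ℕ} (hm : 2 ≤ m) {h : MvPolynomial (Fin m) ℝ} (hh : Lap h = 0)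
    (x : EuclideanSpace ℝ (Fin m)) {r : ℝ} (hr : 0 < r) :
    ∫ y, ev h (x + r • y) ∂(sig m) = ev h x := by
  apply le_antisymm
  · have := green hm (-h) x hr (by intro ρ _ _; simp [Lap_neg, hh, ev_zero])
    simp only [ev_neg, integral_neg] at this
    linarith
  · exact green hm h x hr (by intro ρ _ _; simp [hh, ev_zero])

/-- squared distance polynomial -/
noncomputable def Q {m : ℕ} (c : EuclideanSpace ℝ (Fin m)) : MvPolynomial (Fin m) ℝ :=
  ∑ k, (MvPolynomial.X k - MvPolynomial.C (c k)) * (MvPolynomial.X k - MvPolynomial.C (c k))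

lemma ev_Q {m : ℕ} (c x : EuclideanSpace ℝ (Fin m)) : ev (Q c) x = ‖x - c‖ ^ 2 := by
  rw [EuclideanSpace.real_norm_sq_eq]
  simp [Q, ev_sum, ev_mul, ev_sub, ev_X, ev_C, sq]

lemma pderiv_Q {m : ℕ} (c : EuclideanSpace ℝ (Fin m)) (i : Fin m) :
    MvPolynomial.pderiv i (Q c) = MvPolynomial.C 2 * (MvPolynomial.X i - MvPolynomial.C (c i)) := by
  have hC : (MvPolynomial.C 2 : MvPolynomial (Fin m) ℝ) = 1 + 1 := by
    rw [← MvPolynomial.C_1, ← MvPolynomial.C_add]; norm_num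
  simp only [Q, map_sum, Derivation.leibniz, map_sub, MvPolynomial.pderiv_X, MvPolynomial.pderiv_C,
    Pi.single_apply, sub_zero, smul_eq_mul, mul_ite, mul_one, mul_zero, Finset.sum_add_distrib, hC]
  simp
  ring

lemma Lap_Q {m : ℕ} (c : EuclideanSpace ℝ (Fin m)) : Lap (Q c) = MvPolynomial.C (2 * (m : ℝ)) := by
  simp only [Lap, pderiv_Q, Derivation.leibniz, map_sub, MvPolynomial.pderiv_X, MvPolynomial.pderiv_C]
  simp [mul_comm]

lemma poly_max {m : ℕ} (hm : 2 ≤ m) {h : MvPolynomial (Fin m) ℝ} (hh : Lap h = 0)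
    {c : EuclideanSpace ℝ (Fin m)} {R : ℝ} (hR : 0 < R) {B : ℝ} (hB : ∀ x ∈ sphere c R, ev h x ≤ B) :
    ∀ x ∈ closedBall c R, ev h x ≤ B := by
  have := max_principle hm (Ω := ball c R) isOpen_ball isBounded_ball (w := ev h) (c := B)
    ((ev_continuous h).upperSemicontinuous.upperSemicontinuousOn _) (by rw [frontier_ball c hR.ne']; exact hB) (by
      intro x hx
      obtain ⟨r, hr, hxr⟩ := nhds_basis_closedBall.mem_iff.1 (isOpen_ball.mem_nhds hx)
      exact ⟨r, hr, hxr, integrable_of_contOn hm hr.le (ev_continuous h).continuousOn, (harm_mvp hm hh x hr).ge⟩)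
  rwa [closure_ball c hR.ne'] at this

lemma poly_zero_of_ball {m : ℕ} {q : MvPolynomial (Fin m) ℝ} {c : EuclideanSpace ℝ (Fin m)} {R : ℝ}
    (hR : 0 < R) (h : ∀ x ∈ ball c R, ev q x = 0) : q = 0 := by
  have hcont : Continuous (fun v : Fin m → ℝ => (WithLp.toLp 2 v : EuclideanSpace ℝ (Fin m))) := by fun_prop
  have hop : IsOpen ((fun v : Fin m → ℝ => (WithLp.toLp 2 v : EuclideanSpace ℝ (Fin m))) ⁻¹' ball c R) :=
    isOpen_ball.preimage hcont
  obtain ⟨ε, hε, hsub⟩ := Metric.isOpen_iff.1 hop (c.ofLp) (by simpa using hR)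
  apply MvPolynomial.funext_set (fun i => ball (c i) ε)
  · intro i
    rw [Real.ball_eq_Ioo]
    exact Set.Ioo_infinite (by linarith)
  · intro v hv
    have : v ∈ ball c.ofLp ε := by
      rw [ball_pi _ hε]; exact hv
    have := h _ (hsub this)
    simpa [ev] using this

lemma dirichlet_poly {m : ℕ} (hm : 2 ≤ m) (c : EuclideanSpace ℝ (Fin m)) {R : ℝ} (hR : 0 < R)
    (p : MvPolynomial (Fin m) ℝ) :
    ∃ h : MvPolynomial (Fin m) ℝ, Lap h = 0 ∧ ∀ x ∈ sphere c R, ev h x = ev p x := by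
  let ρ : MvPolynomial (Fin m) ℝ := MvPolynomial.C (R ^ 2) - Q c
  have hρd : ρ.totalDegree ≤ 2 := by
    refine (MvPolynomial.totalDegree_sub _ _).trans (max_le (by rw [MvPolynomial.totalDegree_C]; norm_num) ?_)
    refine MvPolynomial.totalDegree_finsetSum_le ?_
    intro i _
    refine (MvPolynomial.totalDegree_mul _ _).trans ?_
    have : (MvPolynomial.X i - MvPolynomial.C (c i) : MvPolynomial (Fin m) ℝ).totalDegree ≤ 1 :=
      (MvPolynomial.totalDegree_sub _ _).trans (by simp)
    omega
  have hρ : ∀ x, ev ρ x = R ^ 2 - ‖x - c‖ ^ 2 := by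
    intro x; simp only [ρ, ev_sub, ev_C, ev_Q]
  let V := MvPolynomial.restrictTotalDegree (Fin m) ℝ p.totalDegree
  let T : MvPolynomial (Fin m) ℝ →ₗ[ℝ] MvPolynomial (Fin m) ℝ := LapL m ∘ₗ LinearMap.mulLeft ℝ ρ
  have hT : ∀ q, T q = Lap (ρ * q) := by intro q; simp [T, LapL_apply]
  have hTV : ∀ q ∈ V, T q ∈ V := by
    intro q hq
    rw [MvPolynomial.mem_restrictTotalDegree] at hq ⊢
    rw [hT]
    refine MvPolynomial.totalDegree_finsetSum_le ?_
    intro i _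
    apply totalDegree_pderiv
    apply totalDegree_pderiv
    refine (MvPolynomial.totalDegree_mul _ _).trans ?_
    omega
  have hinj : Function.Injective (T.restrict hTV) := by
    rw [← LinearMap.ker_eq_bot, LinearMap.ker_eq_bot']
    rintro ⟨q, hq⟩ h0
    have h0' : Lap (ρ * q) = 0 := by
      have := congrArg Subtype.val h0
      simpa [hT] using this
    have hs : ∀ x ∈ sphere c R, ev (ρ * q) x = 0 := by
      intro x hx
      rw [mem_sphere, dist_eq_norm] at hx
      rw [ev_mul, hρ, hx]; ring
    have h1 := poly_max hm h0' hR (B := 0) (fun x hx => (hs x hx).le)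
    have h2 := poly_max hm (h := -(ρ * q)) (by rw [Lap_neg, h0', neg_zero]) hR (B := 0)
      (fun x hx => by rw [ev_neg, hs x hx, neg_zero])
    apply Subtype.ext
    change q = 0
    apply poly_zero_of_ball hR (c := c)
    intro x hx
    have h3 := h1 x (ball_subset_closedBall hx)
    have h4 := h2 x (ball_subset_closedBall hx)
    rw [ev_neg] at h4
    have h5 : ev ρ x * ev q x = 0 := by rw [← ev_mul]; linarith
    refine (mul_eq_zero.1 h5).resolve_left ?_
    rw [hρ]
    rw [mem_ball, dist_eq_norm] at hx
    have : ‖x - c‖ ^ 2 < R ^ 2 := pow_lt_pow_left₀ hx (norm_nonneg _) two_ne_zero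
    linarith
  have hsurj := LinearMap.injective_iff_surjective.1 hinj
  have hLp : Lap p ∈ V := by
    rw [MvPolynomial.mem_restrictTotalDegree]
    refine MvPolynomial.totalDegree_finsetSum_le ?_
    intro i _
    apply totalDegree_pderiv
    apply totalDegree_pderiv
    omega
  obtain ⟨⟨q, hq⟩, hq2⟩ := hsurj ⟨Lap p, hLp⟩
  have hq3 : Lap (ρ * q) = Lap p := by
    have := congrArg Subtype.val hq2
    simpa [hT] using this
  refine ⟨p - ρ * q, by rw [Lap_sub, hq3, sub_self], ?_⟩
  intro x hx
  rw [mem_sphere, dist_eq_norm] at hx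
  rw [ev_sub, ev_mul, hρ, hx]; ring

lemma mean_close {m : ℕ} (hm : 2 ≤ m) {f g : EuclideanSpace ℝ (Fin m) → ℝ} {x : EuclideanSpace ℝ (Fin m)}
    {r ε : ℝ} (hr : 0 ≤ r) (hf : Integrable (fun y => f (x + r • y)) (sig m))
    (hg : Integrable (fun y => g (x + r • y)) (sig m))
    (h : ∀ z ∈ closedBall x r, |f z - g z| ≤ ε) :
    |∫ y, f (x + r • y) ∂(sig m) - ∫ y, g (x + r • y) ∂(sig m)| ≤ ε := by
  haveI := sig_prob m hm
  rw [← integral_sub hf hg, ← Real.norm_eq_abs]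
  have := norm_integral_le_of_norm_le_const (μ := sig m) (C := ε)
    (f := fun y => f (x + r • y) - g (x + r • y)) (by
      filter_upwards [sig_ae m] with y hy
      exact h _ (by simp [norm_smul, hy, abs_of_nonneg hr]))
  simpa using this

/-- pointwise form of harmonic polynomial approximation on a ball -/
def HarmLim {m : ℕ} (P : ℕ → MvPolynomial (Fin m) ℝ) (g : EuclideanSpace ℝ (Fin m) → ℝ)
    (K : Set (EuclideanSpace ℝ (Fin m))) (C : ℝ) : Prop :=
  (∀ n, Lap (P n) = 0) ∧ ∀ n, ∀ x ∈ K, |ev (P n) x - g x| ≤ C * (1 / ((n : ℝ) + 1))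

lemma cauchy_limit {F : ℕ → ℝ} {C : ℝ} (h : ∀ n k : ℕ, |F n - F k| ≤ C * (1 / ((n : ℝ) + 1)) + C * (1 / ((k : ℝ) + 1))) :
    ∃ L, Filter.Tendsto F Filter.atTop (nhds L) ∧ ∀ n : ℕ, |F n - L| ≤ C * (1 / ((n : ℝ) + 1)) := by
  have h0 : Filter.Tendsto (fun k : ℕ => C * (1 / ((k : ℝ) + 1))) Filter.atTop (nhds 0) := by
    simpa using (tendsto_one_div_add_atTop_nhds_zero_nat (𝕜 := ℝ)).const_mul C
  have hC : CauchySeq F := by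
    refine cauchySeq_of_le_tendsto_0 (fun n : ℕ => 2 * (|C| * (1 / ((n : ℝ) + 1)))) ?_ ?_
    · intro n k N hn hk
      rw [Real.dist_eq]
      refine (h n k).trans ?_
      have aux : ∀ j : ℕ, N ≤ j → C * (1 / ((j : ℝ) + 1)) ≤ |C| * (1 / ((N : ℝ) + 1)) := by
        intro j hj
        apply mul_le_mul (le_abs_self C) _ (by positivity) (abs_nonneg _)
        apply one_div_le_one_div_of_le (by positivity)
        have : (N : ℝ) ≤ j := by exact_mod_cast hj
        linarith
      have := aux n hn
      have := aux k hk
      linarith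
    · simpa using ((tendsto_one_div_add_atTop_nhds_zero_nat (𝕜 := ℝ)).const_mul |C|).const_mul 2
  obtain ⟨L, hL⟩ := cauchySeq_tendsto_of_complete hC
  refine ⟨L, hL, fun n => ?_⟩
  have h1 : Filter.Tendsto (fun k => |F n - F k|) Filter.atTop (nhds |F n - L|) :=
    (hL.const_sub (F n)).abs
  have h2 := h0.const_add (C * (1 / ((n : ℝ) + 1)))
  rw [add_zero] at h2
  exact le_of_tendsto_of_tendsto' h1 h2 (h n)

lemma rate_tendsto (C : ℝ) : Filter.Tendsto (fun k : ℕ => C * (1 / ((k : ℝ) + 1))) Filter.atTop (nhds 0) := by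
  simpa using (tendsto_one_div_add_atTop_nhds_zero_nat (𝕜 := ℝ)).const_mul C

lemma HarmLim.unif {m : ℕ} {P : ℕ → MvPolynomial (Fin m) ℝ} {g : EuclideanSpace ℝ (Fin m) → ℝ}
    {K : Set (EuclideanSpace ℝ (Fin m))} {C : ℝ} (h : HarmLim P g K C) :
    TendstoUniformlyOn (fun n => ev (P n)) g Filter.atTop K := by
  rw [Metric.tendstoUniformlyOn_iff]
  intro ε hε
  filter_upwards [(rate_tendsto C).eventually_lt_const hε] with n hn x hx
  rw [dist_comm, Real.dist_eq]
  exact (h.2 n x hx).trans_lt hn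

lemma HarmLim.continuousOn {m : ℕ} {P : ℕ → MvPolynomial (Fin m) ℝ} {g : EuclideanSpace ℝ (Fin m) → ℝ}
    {K : Set (EuclideanSpace ℝ (Fin m))} {C : ℝ} (h : HarmLim P g K C) : ContinuousOn g K :=
  h.unif.continuousOn (Filter.Frequently.of_forall fun n => (ev_continuous _).continuousOn)

lemma HarmLim.mvp {m : ℕ} (hm : 2 ≤ m) {P : ℕ → MvPolynomial (Fin m) ℝ} {g : EuclideanSpace ℝ (Fin m) → ℝ}
    {K : Set (EuclideanSpace ℝ (Fin m))} {C : ℝ} (h : HarmLim P g K C) {x : EuclideanSpace ℝ (Fin m)} {r : ℝ}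
    (hr : 0 < r) (hx : closedBall x r ⊆ K) : ∫ y, g (x + r • y) ∂(sig m) = g x := by
  have hi := integrable_of_contOn hm hr.le (h.continuousOn.mono hx)
  have h1 : ∀ n : ℕ, |∫ y, g (x + r • y) ∂(sig m) - g x| ≤ 2 * C * (1 / ((n : ℝ) + 1)) := by
    intro n
    have h2 := mean_close hm hr.le (integrable_of_contOn hm hr.le (ev_continuous (P n)).continuousOn) hi
      (fun z hz => h.2 n z (hx hz))
    rw [harm_mvp hm (h.1 n) x hr] at h2
    have h3 := h.2 n x (hx (mem_closedBall_self hr.le))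
    rw [abs_le] at *
    constructor <;> linarith [h2.1, h2.2, h3.1, h3.2]
  have := ge_of_tendsto' (rate_tendsto (2 * C)) h1
  have := abs_nonpos_iff.1 this
  linarith

lemma dirichlet {m : ℕ} (hm : 2 ≤ m) (c : EuclideanSpace ℝ (Fin m)) {R : ℝ} (hR : 0 < R)
    {f : EuclideanSpace ℝ (Fin m) → ℝ} (hf : ContinuousOn f (closedBall c R)) :
    ∃ P g, HarmLim P g (closedBall c R) 1 ∧ ∀ x ∈ sphere c R, g x = f x := by
  have h1 : ∀ n : ℕ, ∃ p : MvPolynomial (Fin m) ℝ, Lap p = 0 ∧ ∀ x ∈ sphere c R, |ev p x - f x| ≤ 1 / ((n : ℝ) + 1) := by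
    intro n
    obtain ⟨p, hp⟩ := stone_weierstrass (isCompact_closedBall c R) hf (ε := 1 / ((n : ℝ) + 1)) (by positivity)
    obtain ⟨h, hh, hh2⟩ := dirichlet_poly hm c hR p
    refine ⟨h, hh, fun x hx => ?_⟩
    rw [hh2 x hx]
    exact (hp x (sphere_subset_closedBall hx)).le
  choose P hP hP2 using h1
  have h2 : ∀ x ∈ closedBall c R, ∀ n k : ℕ,
      |ev (P n) x - ev (P k) x| ≤ 1 * (1 / ((n : ℝ) + 1)) + 1 * (1 / ((k : ℝ) + 1)) := by
    have key : ∀ x ∈ closedBall c R, ∀ n k : ℕ,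
      ev (P n) x - ev (P k) x ≤ 1 * (1 / ((n : ℝ) + 1)) + 1 * (1 / ((k : ℝ) + 1)) := by
      intro x hx n k
      rw [← ev_sub]
      refine poly_max hm (by rw [Lap_sub, hP, hP, sub_zero]) hR ?_ x hx
      intro z hz
      have a := abs_le.1 (hP2 n z hz)
      have b := abs_le.1 (hP2 k z hz)
      rw [ev_sub]
      linarith [a.1, a.2, b.1, b.2]
    intro x hx n k
    rw [abs_le]
    exact ⟨by linarith [key x hx k n], key x hx n k⟩
  have h3 : ∀ x, ∃ L, x ∈ closedBall c R → ∀ n : ℕ, |ev (P n) x - L| ≤ 1 * (1 / ((n : ℝ) + 1)) := by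
    intro x
    by_cases hx : x ∈ closedBall c R
    · obtain ⟨L, _, hL⟩ := cauchy_limit (h2 x hx)
      exact ⟨L, fun _ => hL⟩
    · exact ⟨0, fun h => absurd h hx⟩
  choose g hg using h3
  refine ⟨P, g, ⟨hP, fun n x hx => hg x hx n⟩, fun x hx => ?_⟩
  have : ∀ n : ℕ, |g x - f x| ≤ 2 * (1 / ((n : ℝ) + 1)) := by
    intro n
    have a := abs_le.1 (hP2 n x hx)
    have b := abs_le.1 (hg x (sphere_subset_closedBall hx) n)
    rw [abs_le]
    constructor <;> linarith [a.1, a.2, b.1, b.2]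
  have := abs_nonpos_iff.1 (ge_of_tendsto' (rate_tendsto 2) this)
  linarith

end Kellogg

namespace Kellogg

lemma Lap_coord_mul {m : ℕ} (i : Fin m) (c : ℝ) (h : MvPolynomial (Fin m) ℝ) :
    Lap ((MvPolynomial.X i - MvPolynomial.C c) * h) =
      MvPolynomial.C 2 * MvPolynomial.pderiv i h + (MvPolynomial.X i - MvPolynomial.C c) * Lap h := by
  have hC : (MvPolynomial.C 2 : MvPolynomial (Fin m) ℝ) = 1 + 1 := by
    rw [← MvPolynomial.C_1, ← MvPolynomial.C_add]; norm_num
  simp only [Lap, Derivation.leibniz, map_sub, map_add, MvPolynomial.pderiv_X, MvPolynomial.pderiv_C,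
    Pi.single_apply, sub_zero, smul_eq_mul, hC, Finset.sum_add_distrib, Finset.mul_sum]
  have e1 : ∀ j : Fin m, (MvPolynomial.pderiv j) (if i = j then (1 : MvPolynomial (Fin m) ℝ) else 0) = 0 := by
    intro j; split_ifs <;> simp
  simp [e1]
  ring

lemma grad_est {m : ℕ} (hm : 2 ≤ m) {h : MvPolynomial (Fin m) ℝ} (hh : Lap h = 0)
    {x : EuclideanSpace ℝ (Fin m)} {r B : ℝ} (hr : 0 < r) (hB : ∀ y ∈ closedBall x r, |ev h y| ≤ B)
    (i : Fin m) : |ev (MvPolynomial.pderiv i h) x| ≤ (m / r) * B := by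
  haveI := sig_prob m hm
  have hm0 : (0 : ℝ) < m := by exact_mod_cast (by omega : 0 < m)
  set a := ev (MvPolynomial.pderiv i h) x with ha
  let f : MvPolynomial (Fin m) ℝ :=
    (MvPolynomial.X i - MvPolynomial.C (x i)) * h - MvPolynomial.C (a / m) * Q x
  have hCm : ∀ c : ℝ, Lap (MvPolynomial.C c * Q x) = MvPolynomial.C (c * (2 * m)) := by
    intro c
    rw [← MvPolynomial.smul_eq_C_mul, ← LapL_apply, map_smul, LapL_apply, Lap_Q,
      MvPolynomial.smul_eq_C_mul, ← MvPolynomial.C_mul]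
  have hL : Lap f = MvPolynomial.C 2 * MvPolynomial.pderiv i h - MvPolynomial.C (2 * a) := by
    simp only [f]
    rw [Lap_sub, Lap_coord_mul, hh, mul_zero, add_zero, hCm]
    congr 2
    field_simp
  have hz : ∀ ρ : ℝ, 0 < ρ → ∫ y, ev (Lap f) (x + ρ • y) ∂(sig m) = 0 := by
    intro ρ hρ
    have hi : Integrable (fun y => ev (MvPolynomial.pderiv i h) (x + ρ • y)) (sig m) :=
      integrable_of_contOn hm hρ.le (ev_continuous _).continuousOn
    simp only [hL, ev_sub, ev_mul, ev_C]
    rw [integral_sub (hi.const_mul 2) (integrable_const _), integral_const_mul,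
      harm_mvp hm (by rw [Lap_pderiv, hh, map_zero]) x hρ]
    simp [ha]
  have g1 := green hm f x hr (fun ρ hρ _ => (hz ρ hρ).ge)
  have g2 := green hm (-f) x hr (fun ρ hρ _ => by
    simp only [Lap_neg, ev_neg, integral_neg, hz ρ hρ]; simp)
  simp only [ev_neg, integral_neg] at g2
  have hfx : ev f x = 0 := by
    simp [f, ev_sub, ev_mul, ev_X, ev_C, ev_Q]
  have hI0 : ∫ y, ev f (x + r • y) ∂(sig m) = 0 := by linarith
  have hcong : ∫ y, ev f (x + r • y) ∂(sig m) = ∫ y, (r * (y i * ev h (x + r • y)) - a / m * r ^ 2) ∂(sig m) := by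
    apply integral_congr_ae
    filter_upwards [sig_ae m] with y hy
    simp only [f, ev_sub, ev_mul, ev_X, ev_C, ev_Q]
    simp [norm_smul, hy]
    ring
  have hintg : Integrable (fun y : EuclideanSpace ℝ (Fin m) => y i * ev h (x + r • y)) (sig m) := by
    have hc : Continuous (fun y : EuclideanSpace ℝ (Fin m) => y i * ev h (x + r • y)) := by
      have := ev_continuous h
      fun_prop
    simpa using integrable_of_contOn hm (x := 0) (r := 1) zero_le_one hc.continuousOn
  rw [hI0, integral_sub (hintg.const_mul r) (integrable_const _), integral_const_mul] at hcong
  simp only [integral_const, probReal_univ, one_smul] at hcong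
  have hbd : |∫ y : EuclideanSpace ℝ (Fin m), y i * ev h (x + r • y) ∂(sig m)| ≤ B := by
    have := norm_integral_le_of_norm_le_const (μ := sig m) (C := B)
      (f := fun y : EuclideanSpace ℝ (Fin m) => y i * ev h (x + r • y)) (by
        filter_upwards [sig_ae m] with y hy
        have h1 := hB (x + r • y) (by simp [norm_smul, hy, abs_of_pos hr])
        have h2 : ‖y i‖ ≤ 1 := hy ▸ PiLp.norm_apply_le y i
        rw [norm_mul]
        calc ‖y i‖ * ‖ev h (x + r • y)‖ ≤ 1 * B := mul_le_mul h2 h1 (norm_nonneg _) zero_le_one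
          _ = B := one_mul B)
    simpa using this
  have ha2 : a = (m / r) * ∫ y : EuclideanSpace ℝ (Fin m), y i * ev h (x + r • y) ∂(sig m) := by
    field_simp
    field_simp at hcong
    rw [zero_mul] at hcong
    have := (mul_eq_zero.1 hcong.symm).resolve_left hr.ne'
    linarith
  rw [ha2, abs_mul, abs_of_pos (by positivity)]
  exact mul_le_mul_of_nonneg_left hbd (by positivity)

/-- local uniform approximation by harmonic polynomials with a rate -/
def HL {m : ℕ} (P : ℕ → MvPolynomial (Fin m) ℝ) (g : EuclideanSpace ℝ (Fin m) → ℝ)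
    (U : Set (EuclideanSpace ℝ (Fin m))) : Prop :=
  (∀ n, Lap (P n) = 0) ∧ ∀ x ∈ U, ∃ δ > 0, ∃ C : ℝ, closedBall x δ ⊆ U ∧
    ∀ n : ℕ, ∀ y ∈ closedBall x δ, |ev (P n) y - g y| ≤ C * (1 / ((n : ℝ) + 1))

lemma HL.tendsto {m : ℕ} {P : ℕ → MvPolynomial (Fin m) ℝ} {g : EuclideanSpace ℝ (Fin m) → ℝ}
    {U : Set (EuclideanSpace ℝ (Fin m))} (h : HL P g U) {x : EuclideanSpace ℝ (Fin m)} (hx : x ∈ U) :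
    Filter.Tendsto (fun n => ev (P n) x) Filter.atTop (nhds (g x)) := by
  obtain ⟨δ, hδ, C, _, hC⟩ := h.2 x hx
  rw [tendsto_iff_dist_tendsto_zero]
  refine squeeze_zero (fun _ => dist_nonneg) (fun n => ?_) (rate_tendsto C)
  rw [Real.dist_eq]
  exact hC n x (mem_closedBall_self hδ.le)

lemma HL.deriv {m : ℕ} (hm : 2 ≤ m) {P : ℕ → MvPolynomial (Fin m) ℝ} {g : EuclideanSpace ℝ (Fin m) → ℝ}
    {U : Set (EuclideanSpace ℝ (Fin m))} (h : HL P g U) (i : Fin m) :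
    ∃ gi, HL (fun n => MvPolynomial.pderiv i (P n)) gi U := by
  have key : ∀ x ∈ U, ∃ δ > 0, ∃ C : ℝ, closedBall x δ ⊆ U ∧ ∀ y ∈ closedBall x δ, ∀ n k : ℕ,
      |ev (MvPolynomial.pderiv i (P n)) y - ev (MvPolynomial.pderiv i (P k)) y| ≤
        C * (1 / ((n : ℝ) + 1)) + C * (1 / ((k : ℝ) + 1)) := by
    intro x hx
    obtain ⟨δ, hδ, C, hs, hC⟩ := h.2 x hx
    refine ⟨δ / 2, half_pos hδ, (m / (δ / 2)) * C, (closedBall_subset_closedBall (by linarith)).trans hs, ?_⟩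
    intro y hy n k
    have hyb : closedBall y (δ / 2) ⊆ closedBall x δ := by
      apply closedBall_subset_closedBall'
      rw [mem_closedBall] at hy
      linarith
    have := grad_est hm (h := P n - P k) (by rw [Lap_sub, h.1, h.1, sub_zero]) (x := y) (half_pos hδ)
      (B := C * (1 / ((n : ℝ) + 1)) + C * (1 / ((k : ℝ) + 1))) (by
        intro z hz
        have a := abs_le.1 (hC n z (hyb hz))
        have b := abs_le.1 (hC k z (hyb hz))
        rw [ev_sub, abs_le]
        constructor <;> linarith [a.1, a.2, b.1, b.2]) i
    rw [map_sub, ev_sub] at this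
    refine this.trans (le_of_eq ?_)
    ring
  have hlim : ∀ y, ∃ L, y ∈ U → Filter.Tendsto (fun n => ev (MvPolynomial.pderiv i (P n)) y) Filter.atTop (nhds L) := by
    intro y
    by_cases hy : y ∈ U
    · obtain ⟨δ, hδ, C, hs, hC⟩ := key y hy
      obtain ⟨L, hL, _⟩ := cauchy_limit (hC y (mem_closedBall_self hδ.le))
      exact ⟨L, fun _ => hL⟩
    · exact ⟨0, fun h => absurd h hy⟩
  choose gi hgi using hlim
  refine ⟨gi, fun n => by rw [Lap_pderiv, h.1, map_zero], fun x hx => ?_⟩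
  obtain ⟨δ, hδ, C, hs, hC⟩ := key x hx
  refine ⟨δ, hδ, C, hs, fun n y hy => ?_⟩
  obtain ⟨L, hL, hL2⟩ := cauchy_limit (hC y hy)
  rw [tendsto_nhds_unique (hgi y (hs hy)) hL]
  exact hL2 n

lemma HL.hasFDerivAt {m : ℕ} {P : ℕ → MvPolynomial (Fin m) ℝ} {g : EuclideanSpace ℝ (Fin m) → ℝ}
    {U : Set (EuclideanSpace ℝ (Fin m))} (h : HL P g U) {G : Fin m → EuclideanSpace ℝ (Fin m) → ℝ}
    (hG : ∀ i, HL (fun n => MvPolynomial.pderiv i (P n)) (G i) U) {x : EuclideanSpace ℝ (Fin m)} (hx : x ∈ U) :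
    HasFDerivAt g (∑ i, G i x • (EuclideanSpace.proj i : EuclideanSpace ℝ (Fin m) →L[ℝ] ℝ)) x := by
  have hd : ∀ i, ∃ δ > 0, ∃ C : ℝ, closedBall x δ ⊆ U ∧
    ∀ n : ℕ, ∀ y ∈ closedBall x δ, |ev (MvPolynomial.pderiv i (P n)) y - G i y| ≤ C * (1 / ((n : ℝ) + 1)) :=
    fun i => (hG i).2 x hx
  choose δ hδ C hs hC using hd
  obtain ⟨δ0, hδ0, -, hs0, -⟩ := h.2 x hx
  have hnh : (⋂ i, ball x (δ i)) ∩ ball x δ0 ∈ nhds x :=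
    Filter.inter_mem (Filter.iInter_mem.2 fun i => ball_mem_nhds x (hδ i)) (ball_mem_nhds x hδ0)
  have ho : IsOpen ((⋂ i, ball x (δ i)) ∩ ball x δ0) :=
    (isOpen_iInter_of_finite fun i => isOpen_ball).inter isOpen_ball
  refine hasFDerivAt_of_tendstoUniformlyOn (l := Filter.atTop) ho (f := fun n => ev (P n))
    (f' := fun n y => ∑ i, ev (MvPolynomial.pderiv i (P n)) y • (EuclideanSpace.proj i : EuclideanSpace ℝ (Fin m) →L[ℝ] ℝ))
    (g' := fun y => ∑ i, G i y • (EuclideanSpace.proj i : EuclideanSpace ℝ (Fin m) →L[ℝ] ℝ))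
    ?_ (fun n y _ => ev_hasFDerivAt (P n) y)
    (fun y hy => h.tendsto (hs0 (ball_subset_closedBall hy.2))) (mem_of_mem_nhds hnh)
  rw [Metric.tendstoUniformlyOn_iff]
  intro ε hε
  filter_upwards [(rate_tendsto (∑ i, C i * ‖(EuclideanSpace.proj i : EuclideanSpace ℝ (Fin m) →L[ℝ] ℝ)‖)).eventually_lt_const hε] with n hn y hy
  refine lt_of_le_of_lt ?_ hn
  rw [dist_comm, dist_eq_norm, ← Finset.sum_sub_distrib, Finset.sum_mul]
  refine (norm_sum_le _ _).trans (Finset.sum_le_sum fun i _ => ?_)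
  rw [← sub_smul, norm_smul]
  have := hC i n y (ball_subset_closedBall (Set.mem_iInter.1 hy.1 i))
  calc _ ≤ (C i * (1 / ((n : ℝ) + 1))) * ‖(EuclideanSpace.proj i : EuclideanSpace ℝ (Fin m) →L[ℝ] ℝ)‖ :=
        mul_le_mul_of_nonneg_right this (norm_nonneg _)
    _ = _ := by ring

lemma HL.contDiffOn {m : ℕ} (hm : 2 ≤ m) {U : Set (EuclideanSpace ℝ (Fin m))} (hU : IsOpen U) (k : ℕ) :
    ∀ {P : ℕ → MvPolynomial (Fin m) ℝ} {g : EuclideanSpace ℝ (Fin m) → ℝ} (_ : HL P g U),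
    ContDiffOn ℝ k g U := by
  induction k with
  | zero =>
    intro P g h
    choose G hG using fun i => h.deriv hm i
    refine contDiffOn_zero.2 fun x hx => ((h.hasFDerivAt hG hx).continuousAt).continuousWithinAt
  | succ k ih =>
    intro P g h
    choose G hG using fun i => h.deriv hm i
    rw [show ((k + 1 : ℕ) : WithTop ℕ∞) = (k : WithTop ℕ∞) + 1 by norm_cast, contDiffOn_succ_iff_fderiv_of_isOpen hU]
    refine ⟨fun x hx => (h.hasFDerivAt hG hx).differentiableAt.differentiableWithinAt, by simp, ?_⟩
    have : ContDiffOn ℝ k (fun x => ∑ i, G i x • (EuclideanSpace.proj i : EuclideanSpace ℝ (Fin m) →L[ℝ] ℝ)) U :=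
      ContDiffOn.sum fun i _ => (ih (hG i)).smul contDiffOn_const
    exact this.congr fun x hx => (h.hasFDerivAt hG hx).fderiv

lemma HL.laplacian_eq {m : ℕ} (hm : 2 ≤ m) {U : Set (EuclideanSpace ℝ (Fin m))} (hU : IsOpen U)
    {P : ℕ → MvPolynomial (Fin m) ℝ} {g : EuclideanSpace ℝ (Fin m) → ℝ} (h : HL P g U)
    {x : EuclideanSpace ℝ (Fin m)} (hx : x ∈ U) : laplacian m g x = 0 := by
  choose G hG using fun i => h.deriv hm i
  choose H hH using fun i => (fun j => (hG i).deriv hm j)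
  have single : ∀ (F : Fin m → ℝ) (i : Fin m), (∑ j, F j • (EuclideanSpace.proj j : EuclideanSpace ℝ (Fin m) →L[ℝ] ℝ))
      (EuclideanSpace.single i 1) = F i := by
    intro F i
    simp [ContinuousLinearMap.sum_apply, Pi.single_apply]
  have e1 : ∀ i, fderiv ℝ (fun y => fderiv ℝ g y (EuclideanSpace.single i 1)) x (EuclideanSpace.single i 1) = H i i x := by
    intro i
    have : (fun y => fderiv ℝ g y (EuclideanSpace.single i 1)) =ᶠ[nhds x] G i := by
      filter_upwards [hU.mem_nhds hx] with y hy
      rw [(h.hasFDerivAt hG hy).fderiv, single]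
    rw [this.fderiv_eq, ((hG i).hasFDerivAt (hH i) hx).fderiv, single]
  rw [laplacian, Finset.sum_congr rfl fun i _ => e1 i]
  have t1 : Filter.Tendsto (fun n => ∑ i, ev (MvPolynomial.pderiv i (MvPolynomial.pderiv i (P n))) x) Filter.atTop
      (nhds (∑ i, H i i x)) := tendsto_finsetSum _ fun i _ => (hH i i).tendsto hx
  have t2 : ∀ n, ∑ i, ev (MvPolynomial.pderiv i (MvPolynomial.pderiv i (P n))) x = 0 := by
    intro n
    have := congrArg (fun p => ev p x) (h.1 n)
    simpa [Lap, ev_sum, ev_zero] using this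
  simp only [t2] at t1
  exact (tendsto_nhds_unique t1 tendsto_const_nhds)

lemma HarmLim.HL {m : ℕ} {P : ℕ → MvPolynomial (Fin m) ℝ} {g : EuclideanSpace ℝ (Fin m) → ℝ}
    {c : EuclideanSpace ℝ (Fin m)} {R C : ℝ} (h : HarmLim P g (closedBall c R) C) : HL P g (ball c R) := by
  refine ⟨h.1, fun x hx => ?_⟩
  obtain ⟨r, hr, hxr⟩ := nhds_basis_closedBall.mem_iff.1 (isOpen_ball.mem_nhds hx)
  exact ⟨r, hr, C, hxr, fun n y hy => h.2 n y (ball_subset_closedBall (hxr hy))⟩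

end Kellogg

namespace Kellogg

lemma mem_cb {m : ℕ} {x y : EuclideanSpace ℝ (Fin m)} {r : ℝ} (hr : 0 ≤ r) (hy : ‖y‖ = 1) :
    x + r • y ∈ closedBall x r := by
  simp [norm_smul, hy, abs_of_nonneg hr]

lemma mean_congr {m : ℕ} {f g : EuclideanSpace ℝ (Fin m) → ℝ} {x : EuclideanSpace ℝ (Fin m)} {r : ℝ}
    (hr : 0 ≤ r) (h : ∀ z ∈ sphere x r, f z = g z) :
    ∫ y, f (x + r • y) ∂(sig m) = ∫ y, g (x + r • y) ∂(sig m) := by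
  apply integral_congr_ae
  filter_upwards [sig_ae m] with y hy
  exact h _ (by simp [norm_smul, hy, abs_of_nonneg hr])

lemma comparison {m : ℕ} (hm : 2 ≤ m) {c : EuclideanSpace ℝ (Fin m)} {R C : ℝ} (hR : 0 < R)
    {P : ℕ → MvPolynomial (Fin m) ℝ} {g s : EuclideanSpace ℝ (Fin m) → ℝ}
    (hg : HarmLim P g (closedBall c R) C) (hs : ContinuousOn s (closedBall c R))
    (hb : ∀ x ∈ sphere c R, s x ≤ g x)
    (hloc : ∀ x ∈ ball c R, ∃ r > 0, closedBall x r ⊆ ball c R ∧ s x ≤ ∫ y, s (x + r • y) ∂(sig m)) :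
    ∀ x ∈ closedBall c R, s x ≤ g x := by
  have hcl : closure (ball c R) = closedBall c R := closure_ball c hR.ne'
  have := max_principle hm (Ω := ball c R) isOpen_ball isBounded_ball (w := fun x => s x - g x) (c := 0)
    (by rw [hcl]; exact (hs.sub hg.continuousOn).upperSemicontinuousOn)
    (by rw [frontier_ball c hR.ne']; intro x hx; linarith [hb x hx]) (by
      intro x hx
      obtain ⟨r, hr, hxr, hle⟩ := hloc x hx
      have hxr' := hxr.trans ball_subset_closedBall
      have i1 := integrable_of_contOn hm hr.le (hs.mono hxr')
      have i2 := integrable_of_contOn hm hr.le (hg.continuousOn.mono hxr')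
      refine ⟨r, hr, hxr, i1.sub i2, ?_⟩
      rw [integral_sub i1 i2, hg.mvp hm hr hxr']
      linarith)
  rw [hcl] at this
  intro x hx
  linarith [this x hx]

/-- the sub-mean value property on all closed balls inside `D` -/
def SubM {m : ℕ} (D : Set (EuclideanSpace ℝ (Fin m))) (s : EuclideanSpace ℝ (Fin m) → ℝ) : Prop :=
  ∀ x r, 0 < r → closedBall x r ⊆ D → s x ≤ ∫ y, s (x + r • y) ∂(sig m)

lemma local_global {m : ℕ} (hm : 2 ≤ m) {D : Set (EuclideanSpace ℝ (Fin m))}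
    {s : EuclideanSpace ℝ (Fin m) → ℝ} (hs : ContinuousOn s D)
    (hloc : ∀ x ∈ D, ∃ δ > (0 : ℝ), ∀ r : ℝ, 0 < r → r < δ → s x ≤ ∫ y, s (x + r • y) ∂(sig m)) : SubM D s := by
  intro x R hR hx
  obtain ⟨P, g, hg, hgs⟩ := dirichlet hm x hR (hs.mono hx)
  have := comparison hm hR hg (hs.mono hx) (fun z hz => (hgs z hz).ge) (by
    intro z hz
    obtain ⟨δ, hδ, hδ2⟩ := hloc z (hx (ball_subset_closedBall hz))
    obtain ⟨r, hr, hxr⟩ := nhds_basis_closedBall.mem_iff.1 (isOpen_ball.mem_nhds hz)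
    refine ⟨min r (δ / 2), lt_min hr (half_pos hδ), (closedBall_subset_closedBall (min_le_left _ _)).trans hxr,
      hδ2 _ (lt_min hr (half_pos hδ)) ((min_le_right _ _).trans_lt (half_lt_self hδ))⟩)
      x (mem_closedBall_self hR.le)
  rw [← hg.mvp hm hR subset_rfl, mean_congr hR.le hgs] at this
  exact this

lemma sweep {m : ℕ} (hm : 2 ≤ m) {D : Set (EuclideanSpace ℝ (Fin m))} (ho : IsOpen D)
    {s : EuclideanSpace ℝ (Fin m) → ℝ} (hs : ContinuousOn s (closure D)) (hsub : SubM D s)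
    {c : EuclideanSpace ℝ (Fin m)} {R : ℝ} (hR : 0 < R) (hc : closedBall c R ⊆ D) :
    ∃ s', ContinuousOn s' (closure D) ∧ SubM D s' ∧ (∀ x ∈ closure D, s x ≤ s' x) ∧
      (∀ x ∉ D, s' x = s x) ∧
      ∀ x r, 0 < r → closedBall x r ⊆ ball c R → ∫ y, s' (x + r • y) ∂(sig m) = s' x := by
  classical
  have hcc : closedBall c R ⊆ closure D := hc.trans subset_closure
  obtain ⟨P, g, hg, hgs⟩ := dirichlet hm c hR (hs.mono hcc)
  have hsg := comparison hm hR hg (hs.mono hcc) (fun z hz => (hgs z hz).ge) (by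
    intro z hz
    obtain ⟨r, hr, hxr⟩ := nhds_basis_closedBall.mem_iff.1 (isOpen_ball.mem_nhds hz)
    exact ⟨r, hr, hxr, hsub z r hr ((hxr.trans ball_subset_closedBall).trans hc)⟩)
  let s' : EuclideanSpace ℝ (Fin m) → ℝ := fun x => if x ∈ closedBall c R then g x else s x
  have hin : ∀ x ∈ closedBall c R, s' x = g x := fun x hx => if_pos hx
  have hout : ∀ x ∉ ball c R, s' x = s x := by
    intro x hx
    by_cases hx2 : x ∈ closedBall c R
    · rw [hin x hx2]
      apply hgs
      rw [mem_sphere]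
      rw [mem_ball, not_lt] at hx
      exact le_antisymm hx2 hx
    · exact if_neg hx2
  have hcont : ContinuousOn s' (closure D) := by
    apply ContinuousOn.if
    · intro x hx
      have : x ∈ frontier (closedBall c R) := hx.2
      rw [frontier_closedBall c hR.ne'] at this
      exact hgs x this
    · refine hg.continuousOn.mono ?_
      intro x hx
      have : x ∈ closure (closedBall c R) := hx.2
      rwa [isClosed_closedBall.closure_eq] at this
    · exact hs.mono Set.inter_subset_left
  have hle : ∀ x ∈ closure D, s x ≤ s' x := by
    intro x hx
    by_cases hx2 : x ∈ closedBall c R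
    · rw [hin x hx2]; exact hsg x hx2
    · exact (if_neg hx2).ge
  have hmvp : ∀ x r, 0 < r → closedBall x r ⊆ ball c R → ∫ y, s' (x + r • y) ∂(sig m) = s' x := by
    intro x r hr hx
    have hx' := hx.trans ball_subset_closedBall
    rw [hin x (hx' (mem_closedBall_self hr.le)), ← hg.mvp hm hr hx']
    exact mean_congr hr.le fun z hz => hin z (hx' (sphere_subset_closedBall hz))
  refine ⟨s', hcont, ?_, hle, fun x hx => hout x fun h => hx (hc (ball_subset_closedBall h)), hmvp⟩
  apply local_global hm (hcont.mono subset_closure)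
  intro x hx
  by_cases hxb : x ∈ ball c R
  · obtain ⟨δ, hδ, hxδ⟩ := nhds_basis_closedBall.mem_iff.1 (isOpen_ball.mem_nhds hxb)
    exact ⟨δ, hδ, fun r hr hrδ => (hmvp x r hr ((closedBall_subset_closedBall hrδ.le).trans hxδ)).ge⟩
  · obtain ⟨δ, hδ, hxδ⟩ := nhds_basis_closedBall.mem_iff.1 (ho.mem_nhds hx)
    refine ⟨δ, hδ, fun r hr hrδ => ?_⟩
    have hxr : closedBall x r ⊆ D := (closedBall_subset_closedBall hrδ.le).trans hxδ
    have hxr' := hxr.trans subset_closure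
    rw [hout x hxb]
    refine (hsub x r hr hxr).trans (integral_mono_ae (integrable_of_contOn hm hr.le (hs.mono hxr'))
      (integrable_of_contOn hm hr.le (hcont.mono hxr')) ?_)
    filter_upwards [sig_ae m] with y hy
    exact hle _ (hxr' (mem_cb hr.le hy))

lemma ball_family {m : ℕ} {D : Set (EuclideanSpace ℝ (Fin m))} (ho : IsOpen D) (hne : D.Nonempty) :
    ∃ (c : ℕ → EuclideanSpace ℝ (Fin m)) (R : ℕ → ℝ), (∀ k, 0 < R k ∧ closedBall (c k) (R k) ⊆ D) ∧
      ∀ x r, 0 < r → closedBall x r ⊆ D → ∃ k, closedBall x r ⊆ ball (c k) (R k) := by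
  let d := TopologicalSpace.denseSeq (EuclideanSpace ℝ (Fin m))
  let S := {a : ℕ × ℚ // 0 < (a.2 : ℝ) ∧ closedBall (d a.1) (a.2 : ℝ) ⊆ D}
  have key : ∀ x r, 0 < r → closedBall x r ⊆ D → ∃ a : S, closedBall x r ⊆ ball (d a.1.1) (a.1.2 : ℝ) := by
    intro x r hr hx
    obtain ⟨δ, hδ, hδD⟩ := (isCompact_closedBall x r).exists_cthickening_subset_open ho hx
    rw [cthickening_closedBall hδ.le hr.le] at hδD
    obtain ⟨n, hn⟩ := (TopologicalSpace.denseRange_denseSeq (EuclideanSpace ℝ (Fin m))).exists_dist_lt x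
      (by positivity : 0 < δ / 4)
    obtain ⟨q, hq1, hq2⟩ := exists_rat_btwn (by linarith : r + δ / 4 < r + δ / 2)
    have hn' : dist x (d n) < δ / 4 := hn
    refine ⟨⟨(n, q), by dsimp only; linarith, ?_⟩, ?_⟩
    · refine (closedBall_subset_closedBall' ?_).trans hδD
      rw [dist_comm]
      dsimp only
      linarith
    · apply closedBall_subset_ball'
      dsimp only
      linarith
  obtain ⟨x, hx⟩ := hne
  obtain ⟨r, hr, hxr⟩ := nhds_basis_closedBall.mem_iff.1 (ho.mem_nhds hx)
  obtain ⟨a, _⟩ := key x r hr hxr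
  haveI : Nonempty S := ⟨a⟩
  obtain ⟨f, hf⟩ := exists_surjective_nat S
  refine ⟨fun k => d (f k).1.1, fun k => ((f k).1.2 : ℝ), fun k => (f k).2, fun x r hr hx => ?_⟩
  obtain ⟨b, hb⟩ := key x r hr hx
  obtain ⟨k, rfl⟩ := hf b
  exact ⟨k, hb⟩

lemma sweep_seq {m : ℕ} (hm : 2 ≤ m) {D : Set (EuclideanSpace ℝ (Fin m))} (ho : IsOpen D) (hne : D.Nonempty)
    {q : EuclideanSpace ℝ (Fin m) → ℝ} (hq : ContinuousOn q (closure D)) (hsub : SubM D q) :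
    ∃ S : ℕ → EuclideanSpace ℝ (Fin m) → ℝ, S 0 = q ∧ (∀ n, ContinuousOn (S n) (closure D)) ∧
      (∀ n, SubM D (S n)) ∧ (∀ n, ∀ x ∈ closure D, S n x ≤ S (n + 1) x) ∧
      (∀ n, ∀ x ∉ D, S n x = q x) ∧
      ∀ x r, 0 < r → closedBall x r ⊆ D → ∀ N, ∃ n ≥ N, ∫ y, S n (x + r • y) ∂(sig m) = S n x := by
  obtain ⟨c, R, hcR, hfam⟩ := ball_family ho hne
  let T := {s : EuclideanSpace ℝ (Fin m) → ℝ // ContinuousOn s (closure D) ∧ SubM D s}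
  have step : ∀ (k : ℕ) (s : T), ∃ s' : T, (∀ x ∈ closure D, s.1 x ≤ s'.1 x) ∧
      (∀ x ∉ D, s'.1 x = s.1 x) ∧
      ∀ x r, 0 < r → closedBall x r ⊆ ball (c k) (R k) → ∫ y, s'.1 (x + r • y) ∂(sig m) = s'.1 x := by
    intro k s
    obtain ⟨s', h1, h2, h3⟩ := sweep hm ho s.2.1 s.2.2 (hcR k).1 (hcR k).2
    exact ⟨⟨s', h1, h2⟩, h3⟩
  choose F hF1 hF2 hF3 using step
  let S : ℕ → T := fun n => Nat.rec ⟨q, hq, hsub⟩ (fun n s => F n.unpair.1 s) n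
  have hS : ∀ n, S (n + 1) = F n.unpair.1 (S n) := fun n => rfl
  refine ⟨fun n => (S n).1, rfl, fun n => (S n).2.1, fun n => (S n).2.2, ?_, ?_, ?_⟩
  · intro n x hx
    dsimp only
    rw [hS]
    exact hF1 _ _ x hx
  · intro n x hx
    induction n with
    | zero => rfl
    | succ n ih =>
      dsimp only at ih ⊢
      rw [hS, hF2 _ _ x hx, ih]
  · intro x r hr hx N
    obtain ⟨k, hk⟩ := hfam x r hr hx
    refine ⟨Nat.pair k N + 1, (Nat.right_le_pair k N).trans (Nat.le_succ _), ?_⟩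
    dsimp only
    rw [hS]
    apply hF3
    · exact hr
    · simpa using hk

lemma perron {m : ℕ} (hm : 2 ≤ m) {D : Set (EuclideanSpace ℝ (Fin m))} (ho : IsOpen D) (hne : D.Nonempty)
    (hb : Bornology.IsBounded D)
    {q : EuclideanSpace ℝ (Fin m) → ℝ} (hq : ContinuousOn q (closure D)) (hsub : SubM D q) :
    ∃ (S : ℕ → EuclideanSpace ℝ (Fin m) → ℝ) (h : EuclideanSpace ℝ (Fin m) → ℝ),
      (∀ n, ContinuousOn (S n) (closure D)) ∧ (∀ n, SubM D (S n)) ∧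
      (∀ n, ∀ x ∈ frontier D, S n x = q x) ∧ (∀ x ∈ frontier D, h x = q x) ∧
      (∀ x ∈ closure D, Filter.Tendsto (fun n => S n x) Filter.atTop (nhds (h x))) ∧
      LowerSemicontinuousOn h (closure D) ∧
      ∀ x r, 0 < r → closedBall x r ⊆ D → Integrable (fun y => h (x + r • y)) (sig m) ∧
        ∫ y, h (x + r • y) ∂(sig m) = h x := by
  haveI := sig_prob m hm
  obtain ⟨S, hS0, hSc, hSs, hSm, hSq, hSf⟩ := sweep_seq hm ho hne hq hsub
  have hK : IsCompact (closure D) := hb.isCompact_closure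
  obtain ⟨B, hB⟩ := hK.exists_bound_of_continuousOn hq
  have hfr : ∀ x ∈ frontier D, x ∉ D := by
    intro x hx
    rw [ho.frontier_eq] at hx
    exact hx.2
  have hmono : ∀ x ∈ closure D, Monotone (fun n => S n x) := fun x hx => monotone_nat_of_le_succ fun n => hSm n x hx
  have hup : ∀ n, ∀ x ∈ closure D, S n x ≤ B := by
    intro n
    apply max_principle hm ho hb (hSc n).upperSemicontinuousOn
    · intro x hx
      rw [hSq n x (hfr x hx)]
      exact (le_abs_self _).trans (hB x (frontier_subset_closure hx))
    · intro x hx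
      obtain ⟨r, hr, hxr⟩ := nhds_basis_closedBall.mem_iff.1 (ho.mem_nhds hx)
      exact ⟨r, hr, hxr, integrable_of_contOn hm hr.le ((hSc n).mono (hxr.trans subset_closure)), hSs n x r hr hxr⟩
  have habs : ∀ n, ∀ x ∈ closure D, |S n x| ≤ B := by
    intro n x hx
    rw [abs_le]
    refine ⟨?_, hup n x hx⟩
    have h1 := hmono x hx (Nat.zero_le n)
    dsimp only at h1
    rw [hS0] at h1
    have h2 := (abs_le.1 (hB x hx)).1
    linarith
  have hbdd : ∀ x ∈ closure D, BddAbove (Set.range fun n => S n x) := by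
    intro x hx
    refine ⟨B, ?_⟩
    rintro _ ⟨n, rfl⟩
    exact hup n x hx
  have htend : ∀ x ∈ closure D, Filter.Tendsto (fun n => S n x) Filter.atTop (nhds (⨆ n, S n x)) :=
    fun x hx => tendsto_atTop_ciSup (hmono x hx) (hbdd x hx)
  refine ⟨S, fun x => ⨆ n, S n x, hSc, hSs, fun n x hx => hSq n x (hfr x hx), ?_, htend, ?_, ?_⟩
  · intro x hx
    simp only [hSq _ x (hfr x hx), ciSup_const]
  · exact lowerSemicontinuousOn_ciSup hbdd fun n => (hSc n).lowerSemicontinuousOn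
  · intro x r hr hx
    have hx' := hx.trans subset_closure
    have hmem : ∀ᵐ y ∂(sig m), x + r • y ∈ closure D := by
      filter_upwards [sig_ae m] with y hy
      exact hx' (mem_cb hr.le hy)
    have hintg : ∀ n, Integrable (fun y => S n (x + r • y)) (sig m) :=
      fun n => integrable_of_contOn hm hr.le ((hSc n).mono hx')
    have hae : ∀ᵐ y ∂(sig m), Filter.Tendsto (fun n => S n (x + r • y)) Filter.atTop (nhds (⨆ n, S n (x + r • y))) := by
      filter_upwards [hmem] with y hy
      exact htend _ hy
    have hmeas : AEStronglyMeasurable (fun y => ⨆ n, S n (x + r • y)) (sig m) :=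
      aestronglyMeasurable_of_tendsto_ae Filter.atTop (fun n => (hintg n).aestronglyMeasurable) hae
    refine ⟨Integrable.of_bound hmeas B ?_, ?_⟩
    · filter_upwards [hmem] with y hy
      exact le_of_tendsto' (htend _ hy).abs fun n => habs n _ hy
    · have hT : Filter.Tendsto (fun n => ∫ y, S n (x + r • y) ∂(sig m)) Filter.atTop
          (nhds (∫ y, ⨆ n, S n (x + r • y) ∂(sig m))) := by
        refine tendsto_integral_of_dominated_convergence (fun _ => B) (fun n => (hintg n).aestronglyMeasurable)
          (integrable_const _) (fun n => ?_) hae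
        filter_upwards [hmem] with y hy
        exact habs n _ hy
      have hT2 := hT.sub (htend x (hx' (mem_closedBall_self hr.le)))
      have := (isClosed_singleton (x := (0 : ℝ))).mem_of_frequently_of_tendsto
        (Filter.frequently_atTop.2 fun N => by
          obtain ⟨n, hn, he⟩ := hSf x r hr hx N
          exact ⟨n, hn, by simp [he]⟩) hT2
      exact sub_eq_zero.1 this

end Kellogg

namespace Kellogg

lemma subM_poly {m : ℕ} (hm : 2 ≤ m) {D : Set (EuclideanSpace ℝ (Fin m))} {q : MvPolynomial (Fin m) ℝ}
    (hq : ∀ x ∈ D, 0 ≤ ev (Lap q) x) : SubM D (ev q) := by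
  intro x r hr hx
  apply green hm q x hr
  intro ρ hρ hρr
  apply integral_nonneg_of_ae
  filter_upwards [sig_ae m] with y hy
  exact hq _ (hx (closedBall_subset_closedBall hρr.le (mem_cb hρ.le hy)))

lemma one_side {m : ℕ} (hm : 2 ≤ m) {D : Set (EuclideanSpace ℝ (Fin m))} (ho : IsOpen D)
    (hb : Bornology.IsBounded D) {u h1 h2 : EuclideanSpace ℝ (Fin m) → ℝ} {ε : ℝ}
    {S : ℕ → EuclideanSpace ℝ (Fin m) → ℝ}
    (hu : ContinuousOn u (closure D))
    (hmean : ∀ x ∈ D, ∃ r > (0 : ℝ), closedBall x r ⊆ D ∧ ∫ y, u (x + r • y) ∂(sig m) = u x)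
    (hSc : ∀ n, ContinuousOn (S n) (closure D)) (hSs : ∀ n, SubM D (S n))
    (hfr : ∀ n, ∀ x ∈ frontier D, S n x - u x - h2 x ≤ ε)
    (ht : ∀ x ∈ closure D, Filter.Tendsto (fun n => S n x) Filter.atTop (nhds (h1 x)))
    (hlsc : LowerSemicontinuousOn h2 (closure D))
    (hmvp : ∀ x r, 0 < r → closedBall x r ⊆ D → Integrable (fun y => h2 (x + r • y)) (sig m) ∧
        ∫ y, h2 (x + r • y) ∂(sig m) = h2 x) :
    ∀ x ∈ closure D, h1 x - h2 x - u x ≤ ε := by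
  have key : ∀ n, ∀ x ∈ closure D, (S n x - u x) + - h2 x ≤ ε := by
    intro n
    apply max_principle hm ho hb (w := fun x => (S n x - u x) + - h2 x)
    · apply UpperSemicontinuousOn.add ((hSc n).sub hu).upperSemicontinuousOn
      exact continuous_neg.comp_lowerSemicontinuousOn_antitone hlsc fun a b hab => neg_le_neg hab
    · intro x hx
      linarith [hfr n x hx]
    · intro x hx
      obtain ⟨r, hr, hxr, hux⟩ := hmean x hx
      obtain ⟨i3, e3⟩ := hmvp x r hr hxr
      have hxr' := hxr.trans subset_closure
      have i1 := integrable_of_contOn hm hr.le ((hSc n).mono hxr')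
      have i2 := integrable_of_contOn hm hr.le (hu.mono hxr')
      refine ⟨r, hr, hxr, (i1.sub i2).add i3.neg, ?_⟩
      rw [integral_add (f := fun y => S n (x + r • y) - u (x + r • y)) (g := fun y => - h2 (x + r • y)) (i1.sub i2) i3.neg, integral_sub i1 i2, integral_neg, hux, e3]
      linarith [hSs n x r hr hxr]
  intro x hx
  have h := (ht x hx).sub_const (h2 x + u x)
  have := le_of_tendsto' h (b := ε) fun n => by linarith [key n x hx]
  linarith

lemma full_mvp {m : ℕ} (hm : 2 ≤ m) {D : Set (EuclideanSpace ℝ (Fin m))} (ho : IsOpen D) (hne : D.Nonempty)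
    (hb : Bornology.IsBounded D) {u : EuclideanSpace ℝ (Fin m) → ℝ}
    (hu : ContinuousOn u (closure D))
    (hmean : ∀ x ∈ D, ∃ r > (0 : ℝ), closedBall x r ⊆ D ∧ ∫ y, u (x + r • y) ∂(sig m) = u x)
    {x : EuclideanSpace ℝ (Fin m)} {r : ℝ} (hr : 0 < r) (hx : closedBall x r ⊆ D) :
    ∫ y, u (x + r • y) ∂(sig m) = u x := by
  have hm0 : (2 : ℝ) ≤ m := by exact_mod_cast hm
  have key : ∀ ε : ℝ, 0 < ε → |∫ y, u (x + r • y) ∂(sig m) - u x| ≤ 2 * ε := by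
    intro ε hε
    have hK : IsCompact (closure D) := hb.isCompact_closure
    obtain ⟨p, hp⟩ := stone_weierstrass hK hu hε
    obtain ⟨A, hA⟩ := hK.exists_bound_of_continuousOn (ev_continuous (Lap p)).continuousOn
    have hCm : ∀ c : ℝ, Lap (MvPolynomial.C c * Q (0 : EuclideanSpace ℝ (Fin m))) = MvPolynomial.C (c * (2 * m)) := by
      intro c
      rw [← MvPolynomial.smul_eq_C_mul, ← LapL_apply, map_smul, LapL_apply, Lap_Q,
        MvPolynomial.smul_eq_C_mul, ← MvPolynomial.C_mul]
    let q2 : MvPolynomial (Fin m) ℝ := MvPolynomial.C A * Q 0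
    have hq2 : SubM D (ev q2) := subM_poly hm fun z hz => by
      have := (norm_nonneg _).trans (hA z (subset_closure hz))
      simp only [q2, hCm, ev_C]
      positivity
    have hq1 : SubM D (ev (p + q2)) := subM_poly hm fun z hz => by
      have h1 := (norm_nonneg _).trans (hA z (subset_closure hz))
      have h2 := (abs_le.1 (hA z (subset_closure hz))).1
      rw [Lap_add, ev_add]
      simp only [q2, hCm, ev_C]
      nlinarith
    obtain ⟨S1, h1, c1, s1, f1, g1, t1, l1, m1⟩ := perron hm ho hne hb (ev_continuous (p + q2)).continuousOn hq1
    obtain ⟨S2, h2, c2, s2, f2, g2, t2, l2, m2⟩ := perron hm ho hne hb (ev_continuous q2).continuousOn hq2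
    have o1 := one_side hm ho hb (ε := ε) hu hmean c1 s1 (h2 := h2) (by
      intro n z hz
      rw [f1 n z hz, g2 z hz, ev_add]
      linarith [(abs_lt.1 (hp z (frontier_subset_closure hz))).2]) t1 l2 m2
    have o2 := one_side hm ho hb (ε := ε) (u := fun z => - u z) hu.neg (by
      intro z hz
      obtain ⟨ρ, hρ, hz1, hz2⟩ := hmean z hz
      exact ⟨ρ, hρ, hz1, by rw [integral_neg, hz2]⟩) c2 s2 (h2 := h1) (by
      intro n z hz
      rw [f2 n z hz, g1 z hz, ev_add]
      linarith [(abs_lt.1 (hp z (frontier_subset_closure hz))).1]) t2 l1 m1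
    have hcl : ∀ z ∈ closure D, |u z - (h1 z - h2 z)| ≤ ε := by
      intro z hz
      rw [abs_le]
      constructor <;> linarith [o1 z hz, o2 z hz]
    have hx' := hx.trans subset_closure
    obtain ⟨i1, e1⟩ := m1 x r hr hx
    obtain ⟨i2, e2⟩ := m2 x r hr hx
    have c := mean_close hm (g := fun z => h1 z - h2 z) hr.le (integrable_of_contOn hm hr.le (hu.mono hx')) (i1.sub i2)
      (fun z hz => hcl z (hx' hz))
    rw [integral_sub i1 i2, e1, e2] at c
    have c' := hcl x (hx' (mem_closedBall_self hr.le))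
    rw [abs_le] at *
    constructor <;> linarith [c.1, c.2, c'.1, c'.2]
  have : |∫ y, u (x + r • y) ∂(sig m) - u x| ≤ 0 := by
    apply le_of_forall_pos_le_add
    intro ε hε
    have := key (ε / 2) (half_pos hε)
    linarith
  exact sub_eq_zero.1 (abs_nonpos_iff.1 this)

lemma HarmLim.neg {m : ℕ} {P : ℕ → MvPolynomial (Fin m) ℝ} {g : EuclideanSpace ℝ (Fin m) → ℝ}
    {K : Set (EuclideanSpace ℝ (Fin m))} {C : ℝ} (h : HarmLim P g K C) :
    HarmLim (fun n => - P n) (fun x => - g x) K C := by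
  refine ⟨fun n => by rw [Lap_neg, h.1, neg_zero], fun n x hx => ?_⟩
  have := h.2 n x hx
  rw [ev_neg, ← abs_neg]
  convert this using 2
  ring

lemma eq_dirichlet {m : ℕ} (hm : 2 ≤ m) {c : EuclideanSpace ℝ (Fin m)} {R : ℝ} (hR : 0 < R)
    {u : EuclideanSpace ℝ (Fin m) → ℝ} (hu : ContinuousOn u (closedBall c R))
    (hmvp : ∀ x r, 0 < r → closedBall x r ⊆ closedBall c R → ∫ y, u (x + r • y) ∂(sig m) = u x) :
    ∃ P g, HL P g (ball c R) ∧ ∀ x ∈ ball c R, u x = g x := by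
  obtain ⟨P, g, hg, hgu⟩ := dirichlet hm c hR hu
  refine ⟨P, g, hg.HL, fun x hx => ?_⟩
  have hr : ∀ z ∈ ball c R, ∃ r > 0, closedBall z r ⊆ ball c R :=
    fun z hz => nhds_basis_closedBall.mem_iff.1 (isOpen_ball.mem_nhds hz)
  have a := comparison hm hR hg hu (fun z hz => (hgu z hz).ge) (fun z hz => by
    obtain ⟨r, hr, hz⟩ := hr z hz
    exact ⟨r, hr, hz, (hmvp z r hr (hz.trans ball_subset_closedBall)).ge⟩) x (ball_subset_closedBall hx)
  have b := comparison hm hR hg.neg hu.neg (fun z hz => by simp [hgu z hz]) (fun z hz => by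
    obtain ⟨r, hr, hz⟩ := hr z hz
    refine ⟨r, hr, hz, ?_⟩
    simp only [Pi.neg_apply, integral_neg]
    rw [hmvp z r hr (hz.trans ball_subset_closedBall)]) x (ball_subset_closedBall hx)
  simp only [Pi.neg_apply] at b
  linarith

end Kellogg

/-- Kellogg's theorem: if a continuous function on the closure of a bounded domain
equals its spherical mean over one admissible sphere centred at each point of the
domain, then it is harmonic. -/
theorem stmt_3 (m : ℕ) (hm : 2 ≤ m) (D : Set (EuclideanSpace ℝ (Fin m)))
    (hD_open : IsOpen D) (hD_conn : IsConnected D)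
    (hD_bdd : Bornology.IsBounded D)
    (u : EuclideanSpace ℝ (Fin m) → ℝ)
    (hu_cont : ContinuousOn u (closure D))
    (hmean : ∀ x ∈ D, ∃ r > (0 : ℝ), closedBall x r ⊆ D ∧ sphereMean m u x r = u x) :
    ContDiffOn ℝ 2 u D ∧ ∀ x ∈ D, laplacian m u x = 0 := by
  have key : ∀ x ∈ D, ContDiffAt ℝ 2 u x ∧ laplacian m u x = 0 := by
    intro x hx
    obtain ⟨R, hR, hxR⟩ := nhds_basis_closedBall.mem_iff.1 (hD_open.mem_nhds hx)
    obtain ⟨P, g, hg, hug⟩ := Kellogg.eq_dirichlet hm hR (hu_cont.mono (hxR.trans subset_closure))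
      (fun z r hr hz => Kellogg.full_mvp hm hD_open hD_conn.nonempty hD_bdd hu_cont hmean hr (hz.trans hxR))
    have hxb : x ∈ ball x R := mem_ball_self hR
    have hnh : ball x R ∈ nhds x := isOpen_ball.mem_nhds hxb
    have hev : u =ᶠ[nhds x] g := Filter.eventuallyEq_of_mem hnh hug
    constructor
    · exact ((Kellogg.HL.contDiffOn hm isOpen_ball 2 hg).contDiffAt hnh).congr_of_eventuallyEq hev
    · rw [← hg.laplacian_eq hm isOpen_ball hxb]
      unfold laplacian
      refine Finset.sum_congr rfl fun i _ => ?_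
      have : (fun y => fderiv ℝ u y (EuclideanSpace.single i 1)) =ᶠ[nhds x]
          (fun y => fderiv ℝ g y (EuclideanSpace.single i 1)) := by
        filter_upwards [hev.fderiv (𝕜 := ℝ)] with y hy
        rw [hy]
      rw [this.fderiv_eq]
  exact ⟨fun x hx => (key x hx).1.contDiffWithinAt, fun x hx => (key x hx).2⟩
end

section
/- (C. Neumann) Let D be a domain in ℝ³ and let u ∈ C²(D) satisfy the modified Helmholtz (Yukawa) equation ∇²u − μ²u = 0 in D for some μ ≠ 0. Then for every x ∈ D and every r > 0 such that the closed ball of radius r centred at x is contained in D, the spherical mean satisfies M(x, r, u) = (sinh(μr)/(μr)) · u(x). -/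
open MeasureTheory Metric

lemma param_deriv (ν : Measure (EuclideanSpace ℝ (Fin 3))) (K : Set (EuclideanSpace ℝ (Fin 3))) (hK : IsCompact K) (hν : ν K ≠ ⊤)
    (U : Set ℝ) (hU : IsOpen U) (F F' : ℝ → (EuclideanSpace ℝ (Fin 3)) → ℝ)
    (hF : ContinuousOn (Function.uncurry F) (U ×ˢ K))
    (hF' : ContinuousOn (Function.uncurry F') (U ×ˢ K))
    (hd : ∀ s ∈ U, ∀ y ∈ K, HasDerivAt (fun s => F s y) (F' s y) s) (s : ℝ) (hs : s ∈ U) :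
    HasDerivAt (fun s => ∫ y in K, F s y ∂ν) (∫ y in K, F' s y ∂ν) s := by
  have : IsFiniteMeasure (ν.restrict K) := ⟨by simpa using hν.lt_top⟩
  obtain ⟨δ, hδ, hδU⟩ := Metric.nhds_basis_closedBall.mem_iff.1 (hU.mem_nhds hs)
  have hc : IsCompact (closedBall s δ ×ˢ K) := (isCompact_closedBall s δ).prod hK
  obtain ⟨C, hC⟩ := hc.exists_bound_of_continuousOn
    (hF'.mono (Set.prod_mono hδU subset_rfl))
  have cont : ∀ G : ℝ → (EuclideanSpace ℝ (Fin 3)) → ℝ, ContinuousOn (Function.uncurry G) (U ×ˢ K) →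
      ∀ t ∈ U, ContinuousOn (G t) K := by
    intro G hG t ht
    exact hG.comp (f := fun y => (t, y)) (by fun_prop) (fun y hy => ⟨ht, hy⟩)
  refine (hasDerivAt_integral_of_dominated_loc_of_deriv_le (μ := ν.restrict K)
    (F := F) (F' := F') (bound := fun _ => C) (Metric.ball_mem_nhds s hδ) ?_ ?_ ?_ ?_ ?_ ?_).2
  · filter_upwards [hU.mem_nhds hs] with t ht
    exact (cont F hF t ht).aestronglyMeasurable hK.measurableSet
  · exact (cont F hF s hs).integrableOn_of_subset_isCompact hK hK.measurableSet subset_rfl hν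
  · exact (cont F' hF' s hs).aestronglyMeasurable hK.measurableSet
  · filter_upwards [ae_restrict_mem hK.measurableSet] with y hy t ht
    exact hC (t, y) ⟨ball_subset_closedBall ht, hy⟩
  · exact integrable_const C
  · filter_upwards [ae_restrict_mem hK.measurableSet] with y hy t ht
    exact hd t (hδU (ball_subset_closedBall ht)) y hy

lemma sphere_fin : μH[((3:ℕ):ℝ)-1] (sphere (0 : (EuclideanSpace ℝ (Fin 3))) 1) ≠ ⊤ := by
  have h2 : ((3:ℕ):ℝ)-1 = ((Fintype.card (Fin 2) : ℕ) : ℝ) := by norm_num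
  let f : (Fin 2 → ℝ) → (EuclideanSpace ℝ (Fin 3)) := fun p =>
    !₂[Real.sin (p 0) * Real.cos (p 1), Real.sin (p 0) * Real.sin (p 1), Real.cos (p 0)]
  let S : Set (Fin 2 → ℝ) := closedBall 0 Real.pi
  have hS : IsCompact S := isCompact_closedBall _ _
  have hf : ContDiff ℝ 1 f := by
    rw [contDiff_euclidean]
    intro i
    fin_cases i <;> simp [f] <;> fun_prop
  obtain ⟨K, hK⟩ := hf.contDiffOn.exists_lipschitzOnWith (s := S) one_ne_zero
    (convex_closedBall _ _) hS
  have hsub : sphere (0:(EuclideanSpace ℝ (Fin 3))) 1 ⊆ f '' S := by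
    intro y hy
    have hn : y 0 ^ 2 + y 1 ^ 2 + y 2 ^ 2 = 1 := by
      have := EuclideanSpace.norm_sq_eq y
      rw [mem_sphere_zero_iff_norm.1 hy, Fin.sum_univ_three] at this
      simp at this
      linarith
    refine ⟨![Real.arccos (y 2), Complex.arg ⟨y 0, y 1⟩], ?_, ?_⟩
    · simp only [S, mem_closedBall_zero_iff]
      rw [pi_norm_le_iff_of_nonneg Real.pi_pos.le]
      intro i
      fin_cases i
      · simp [abs_of_nonneg (Real.arccos_nonneg _), Real.arccos_le_pi]
      · simp [Complex.abs_arg_le_pi]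
    · have hs : Real.sqrt (1 - y 2 ^ 2) = ‖(⟨y 0, y 1⟩ : ℂ)‖ := by
        rw [Complex.norm_def, Complex.normSq_mk]; congr 1; linarith
      ext i
      fin_cases i
      · simp [f, Real.sin_arccos, hs, Complex.norm_mul_cos_arg]
      · simp [f, Real.sin_arccos, hs, Complex.norm_mul_sin_arg]
      · simp [f]
        exact Real.cos_arccos (by nlinarith [sq_nonneg (y 0), sq_nonneg (y 1)])
          (by nlinarith [sq_nonneg (y 0), sq_nonneg (y 1)])
  have := (measure_mono hsub).trans (hK.hausdorffMeasure_image_le (d := ((3:ℕ):ℝ)-1) (by norm_num))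
  refine (this.trans_lt ?_).ne
  rw [h2, hausdorffMeasure_pi_real]
  refine ENNReal.mul_lt_top ?_ hS.measure_lt_top
  exact ENNReal.rpow_lt_top_of_nonneg (by positivity) ENNReal.coe_ne_top

lemma sphere_pos : μH[((3:ℕ):ℝ)-1] (sphere (0 : (EuclideanSpace ℝ (Fin 3))) 1) ≠ 0 := by
  have h2 : ((3:ℕ):ℝ)-1 = ((Fintype.card (Fin 2) : ℕ) : ℝ) := by norm_num
  let g : (EuclideanSpace ℝ (Fin 3)) → (Fin 2 → ℝ) := fun y => ![y 0, y 1]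
  have hg : LipschitzWith 1 g := by
    refine LipschitzWith.of_dist_le_mul fun y z => ?_
    rw [dist_pi_le_iff (by positivity)]
    intro i
    have h : ∀ k, dist (y k) (z k) ≤ dist y z := fun k => by
      rw [dist_eq_norm, dist_eq_norm]; exact PiLp.norm_apply_le (y - z) k
    fin_cases i
    · simpa [g] using h 0
    · simpa [g] using h 1
  have hsub : ball (0 : Fin 2 → ℝ) (1/2) ⊆ g '' sphere (0:(EuclideanSpace ℝ (Fin 3))) 1 := by
    intro p hp
    have hp' := mem_ball_zero_iff.1 hp
    have h0 := abs_lt.1 ((norm_le_pi_norm p 0).trans_lt hp')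
    have h1 := abs_lt.1 ((norm_le_pi_norm p 1).trans_lt hp')
    refine ⟨!₂[p 0, p 1, Real.sqrt (1 - p 0 ^ 2 - p 1 ^ 2)], ?_, ?_⟩
    · rw [mem_sphere_zero_iff_norm, EuclideanSpace.norm_eq, Fin.sum_univ_three]
      have : 0 ≤ 1 - p 0 ^ 2 - p 1 ^ 2 := by nlinarith
      simp [Real.sq_sqrt this]
    · ext i; fin_cases i <;> simp [g]
  intro h0
  have := (measure_mono hsub).trans
    ((hg.lipschitzOnWith (s := sphere 0 1)).hausdorffMeasure_image_le (d := ((3:ℕ):ℝ)-1)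
      (by norm_num))
  rw [h0, h2, hausdorffMeasure_pi_real] at this
  have hpos := Metric.measure_ball_pos volume (0 : Fin 2 → ℝ) (r := 1/2) (by norm_num)
  simp at this

/-- generator -/
noncomputable def Jgen (i j : Fin 3) : (EuclideanSpace ℝ (Fin 3)) →L[ℝ] (EuclideanSpace ℝ (Fin 3)) :=
  (EuclideanSpace.proj i : (EuclideanSpace ℝ (Fin 3)) →L[ℝ] ℝ).smulRight (EuclideanSpace.single j 1) -
  (EuclideanSpace.proj j : (EuclideanSpace ℝ (Fin 3)) →L[ℝ] ℝ).smulRight (EuclideanSpace.single i 1)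
noncomputable def Pgen (i j : Fin 3) : (EuclideanSpace ℝ (Fin 3)) →L[ℝ] (EuclideanSpace ℝ (Fin 3)) :=
  (EuclideanSpace.proj i : (EuclideanSpace ℝ (Fin 3)) →L[ℝ] ℝ).smulRight (EuclideanSpace.single i 1) +
  (EuclideanSpace.proj j : (EuclideanSpace ℝ (Fin 3)) →L[ℝ] ℝ).smulRight (EuclideanSpace.single j 1)
noncomputable def Rot (i j : Fin 3) (t : ℝ) : (EuclideanSpace ℝ (Fin 3)) →L[ℝ] (EuclideanSpace ℝ (Fin 3)) :=
  ContinuousLinearMap.id ℝ (EuclideanSpace ℝ (Fin 3)) + (Real.cos t - 1) • Pgen i j + Real.sin t • Jgen i j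

lemma Rot_norm (i j : Fin 3) (hij : i ≠ j) (t : ℝ) (y : (EuclideanSpace ℝ (Fin 3))) : ‖Rot i j t y‖ = ‖y‖ := by
  rw [EuclideanSpace.norm_eq, EuclideanSpace.norm_eq, Fin.sum_univ_three, Fin.sum_univ_three]
  congr 1
  have := Real.sin_sq_add_cos_sq t
  simp only [Real.norm_eq_abs, sq_abs]
  fin_cases i <;> fin_cases j <;> first | exact absurd rfl hij | skip
  all_goals
    simp [Rot, Pgen, Jgen]
    have hs : Real.sin t ^ 2 = 1 - Real.cos t ^ 2 := by linarith
    ring_nf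
    rw [hs]
    ring

lemma Rot_integral (i j : Fin 3) (hij : i ≠ j) (t : ℝ) (g : (EuclideanSpace ℝ (Fin 3)) → ℝ) :
    ∫ y in sphere (0:(EuclideanSpace ℝ (Fin 3))) 1, g (Rot i j t y) ∂μH[((3:ℕ):ℝ)-1] =
    ∫ y in sphere (0:(EuclideanSpace ℝ (Fin 3))) 1, g y ∂μH[((3:ℕ):ℝ)-1] := by
  let L : (EuclideanSpace ℝ (Fin 3)) →ₗᵢ[ℝ] (EuclideanSpace ℝ (Fin 3)) := ⟨(Rot i j t : (EuclideanSpace ℝ (Fin 3)) →ₗ[ℝ] (EuclideanSpace ℝ (Fin 3))), Rot_norm i j hij t⟩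
  let e : (EuclideanSpace ℝ (Fin 3)) ≃ₗᵢ[ℝ] (EuclideanSpace ℝ (Fin 3)) := L.toLinearIsometryEquiv rfl
  have he : ∀ y, e y = Rot i j t y := fun y => rfl
  have mp := e.toIsometryEquiv.measurePreserving_hausdorffMeasure (((3:ℕ):ℝ)-1)
  have := mp.setIntegral_preimage_emb e.toHomeomorph.measurableEmbedding g (sphere (0:(EuclideanSpace ℝ (Fin 3))) 1)
  rw [← this]
  have hpre : (e.toIsometryEquiv : (EuclideanSpace ℝ (Fin 3)) → (EuclideanSpace ℝ (Fin 3))) ⁻¹' sphere (0:(EuclideanSpace ℝ (Fin 3))) 1 = sphere 0 1 := by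
    ext y; simp
  rw [hpre]
  rfl

lemma Rot_deriv_integral (i j : Fin 3) (hij : i ≠ j) (V : Set (EuclideanSpace ℝ (Fin 3))) (hV : IsOpen V)
    (hSV : sphere (0:(EuclideanSpace ℝ (Fin 3))) 1 ⊆ V) (g : (EuclideanSpace ℝ (Fin 3)) → ℝ) (hg : ContDiffOn ℝ 1 g V) :
    ∫ y in sphere (0:(EuclideanSpace ℝ (Fin 3))) 1, fderiv ℝ g y (Jgen i j y) ∂μH[((3:ℕ):ℝ)-1] = 0 := by
  have hm : ∀ t, ∀ y ∈ sphere (0:(EuclideanSpace ℝ (Fin 3))) 1, Rot i j t y ∈ V := fun t y hy => hSV (by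
    rw [mem_sphere_zero_iff_norm, Rot_norm i j hij]; exact mem_sphere_zero_iff_norm.1 hy)
  have hcR : Continuous fun p : ℝ × (EuclideanSpace ℝ (Fin 3)) => Rot i j p.1 p.2 := by
    simp only [Rot, add_apply, smul_apply,
      ContinuousLinearMap.id_apply]
    fun_prop
  have key := param_deriv μH[((3:ℕ):ℝ)-1] (sphere (0:(EuclideanSpace ℝ (Fin 3))) 1) (isCompact_sphere _ _) sphere_fin
    Set.univ isOpen_univ (fun t y => g (Rot i j t y))
    (fun t y => fderiv ℝ g (Rot i j t y) (-Real.sin t • Pgen i j y + Real.cos t • Jgen i j y))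
    (hg.continuousOn.comp hcR.continuousOn (fun p hp => hm p.1 p.2 hp.2))
    (by
      have h1 : ContinuousOn (fun p : ℝ × (EuclideanSpace ℝ (Fin 3)) => fderiv ℝ g (Rot i j p.1 p.2))
          (Set.univ ×ˢ sphere (0:(EuclideanSpace ℝ (Fin 3))) 1) :=
        (hg.continuousOn_fderiv_of_isOpen hV le_rfl).comp hcR.continuousOn
          (fun p hp => hm p.1 p.2 hp.2)
      refine h1.clm_apply (Continuous.continuousOn ?_)
      fun_prop)
    (by
      intro t _ y hy
      have hd := ((hg.differentiableOn one_ne_zero).differentiableAt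
        (hV.mem_nhds (hm t y hy))).hasFDerivAt
      refine hd.comp_hasDerivAt t ?_
      simp only [Rot, add_apply, smul_apply,
        ContinuousLinearMap.id_apply]
      have := (((Real.hasDerivAt_cos t).sub_const 1).smul_const (Pgen i j y)).add
        ((Real.hasDerivAt_sin t).smul_const (Jgen i j y))
      have h3 := this.const_add y
      convert h3 using 1
      ext s : 1
      simp [add_assoc])
    0 (Set.mem_univ _)
  simp only [Rot_integral i j hij] at key
  have h0 := key.unique (hasDerivAt_const 0 _)
  simpa [Rot] using h0

set_option maxHeartbeats 1600000

lemma Jgen_identity (B : (EuclideanSpace ℝ (Fin 3)) →L[ℝ] (EuclideanSpace ℝ (Fin 3)) →L[ℝ] ℝ) (ℓ : (EuclideanSpace ℝ (Fin 3)) →L[ℝ] ℝ) (s : ℝ) (y : (EuclideanSpace ℝ (Fin 3)))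
    (hy : y ∈ sphere (0:(EuclideanSpace ℝ (Fin 3))) 1) :
    (s * B (Jgen 0 1 y) (Jgen 0 1 y) + ℓ (Jgen 0 1 (Jgen 0 1 y))) +
    (s * B (Jgen 0 2 y) (Jgen 0 2 y) + ℓ (Jgen 0 2 (Jgen 0 2 y))) +
    (s * B (Jgen 1 2 y) (Jgen 1 2 y) + ℓ (Jgen 1 2 (Jgen 1 2 y))) =
    s * (∑ i : Fin 3, B (EuclideanSpace.single i 1) (EuclideanSpace.single i 1)) -
      s * B y y - 2 * ℓ y := by
  have hn : y 0 ^ 2 + y 1 ^ 2 + y 2 ^ 2 = 1 := by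
    have := EuclideanSpace.norm_sq_eq y
    rw [mem_sphere_zero_iff_norm.1 hy, Fin.sum_univ_three] at this
    simp at this
    linarith
  have hdec : y = y 0 • EuclideanSpace.single (0 : Fin 3) (1:ℝ) +
      y 1 • EuclideanSpace.single (1 : Fin 3) (1:ℝ) +
      y 2 • EuclideanSpace.single (2 : Fin 3) (1:ℝ) := by
    ext i; fin_cases i <;> simp
  have hB : B y y = B (y 0 • EuclideanSpace.single (0 : Fin 3) (1:ℝ) +
      y 1 • EuclideanSpace.single (1 : Fin 3) (1:ℝ) +
      y 2 • EuclideanSpace.single (2 : Fin 3) (1:ℝ)) (y 0 • EuclideanSpace.single (0 : Fin 3) (1:ℝ) +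
      y 1 • EuclideanSpace.single (1 : Fin 3) (1:ℝ) +
      y 2 • EuclideanSpace.single (2 : Fin 3) (1:ℝ)) := by rw [← hdec]
  have hl : ℓ y = ℓ (y 0 • EuclideanSpace.single (0 : Fin 3) (1:ℝ) +
      y 1 • EuclideanSpace.single (1 : Fin 3) (1:ℝ) +
      y 2 • EuclideanSpace.single (2 : Fin 3) (1:ℝ)) := by rw [← hdec]
  have h0 : y 0 ^ 2 = 1 - y 1 ^ 2 - y 2 ^ 2 := by linarith
  rw [hB, hl, Fin.sum_univ_three]
  simp only [Jgen, sub_apply, ContinuousLinearMap.smulRight_apply, map_sub, map_add, map_smul,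
    add_apply, smul_apply, smul_eq_mul]
  simp [show (0:Fin 3) ≠ 2 by decide, show (1:Fin 3) ≠ 2 by decide, show (2:Fin 3) ≠ 0 by decide,
    show (2:Fin 3) ≠ 1 by decide]
  ring_nf
  rw [h0]
  ring

lemma ode_solve (c r : ℝ) (hr : 0 < r) (N N1 N2 : ℝ → ℝ)
    (h1 : ∀ s ∈ Set.Icc 0 r, HasDerivAt N (N1 s) s)
    (h2 : ∀ s ∈ Set.Icc 0 r, HasDerivAt N1 (N2 s) s)
    (hode : ∀ s ∈ Set.Icc 0 r, s * N2 s + 2 * N1 s = c ^ 2 * (s * N s)) :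
    c * (r * N r) = Real.sinh (c * r) * N 0 := by
  have hch : ∀ s, HasDerivAt (fun s => Real.cosh (c * s)) (Real.sinh (c * s) * c) s := fun s => by
    simpa using ((hasDerivAt_id s).const_mul c).cosh
  have hsh : ∀ s, HasDerivAt (fun s => Real.sinh (c * s)) (Real.cosh (c * s) * c) s := fun s => by
    simpa using ((hasDerivAt_id s).const_mul c).sinh
  have hw : ∀ s ∈ Set.Icc 0 r, HasDerivAt (fun s => s * N s) (N s + s * N1 s) s := fun s hs => by
    refine ((hasDerivAt_id s).mul (h1 s hs)).congr_deriv ?_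
    simp
  have hw' : ∀ s ∈ Set.Icc 0 r, HasDerivAt (fun s => N s + s * N1 s) (c ^ 2 * (s * N s)) s :=
    fun s hs => by
      have := (h1 s hs).add ((hasDerivAt_id s).mul (h2 s hs))
      refine this.congr_deriv ?_
      simp only [id]
      rw [← hode s hs]; ring
  have const : ∀ a : ℝ → ℝ, (∀ s ∈ Set.Icc 0 r, HasDerivAt a 0 s) → a r = a 0 := by
    intro a ha
    obtain ⟨d, -, hd⟩ := exists_hasDerivAt_eq_slope a (fun _ => 0) hr
      (fun s hs => (ha s hs).continuousAt.continuousWithinAt)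
      (fun s hs => ha s (Set.Ioo_subset_Icc_self hs))
    have h3 : (r - 0) ≠ 0 := by simpa using hr.ne'
    have := (eq_div_iff h3).1 hd
    linarith
  have ha := const (fun s => (N s + s * N1 s) * Real.cosh (c * s) - c * ((s * N s) * Real.sinh (c * s)))
    (fun s hs => (((hw' s hs).mul (hch s)).sub (((hw s hs).mul (hsh s)).const_mul c)).congr_deriv
      (by ring))
  have hb := const (fun s => (N s + s * N1 s) * Real.sinh (c * s) - c * ((s * N s) * Real.cosh (c * s)))
    (fun s hs => (((hw' s hs).mul (hsh s)).sub (((hw s hs).mul (hch s)).const_mul c)).congr_deriv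
      (by ring))
  simp at ha hb
  have hcs := Real.cosh_sq (c * r)
  have : c * (r * N r) * (Real.cosh (c*r) ^ 2 - Real.sinh (c*r) ^ 2) =
      Real.sinh (c * r) * N 0 := by
    linear_combination Real.sinh (c*r) * ha - Real.cosh (c*r) * hb
  rw [hcs] at this
  linarith

/-- C. Neumann's mean value theorem: if `u` is panharmonic (`∇²u − μ²u = 0`) in a
domain `D ⊆ ℝ³`, then `M(x, r, u) = (sinh(μr)/(μr)) u(x)` for every admissible
sphere. -/
theorem stmt_10 (D : Set (EuclideanSpace ℝ (Fin 3)))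
    (hD_open : IsOpen D) (hD_conn : IsConnected D)
    (u : EuclideanSpace ℝ (Fin 3) → ℝ)
    (hu_C2 : ContDiffOn ℝ 2 u D)
    (μ : ℝ) (hμ : μ ≠ 0)
    (hu_pan : ∀ x ∈ D, laplacian 3 u x - μ ^ 2 * u x = 0) :
    ∀ x ∈ D, ∀ r > (0 : ℝ), closedBall x r ⊆ D →
      sphereMean 3 u x r = (Real.sinh (μ * r) / (μ * r)) * u x := by
  intro x hx r hr hball
  obtain ⟨δ, hδ, hδD⟩ := (isCompact_closedBall x r).exists_thickening_subset_open hD_open hball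
  rw [thickening_closedBall hδ hr.le] at hδD
  set S : Set (EuclideanSpace ℝ (Fin 3)) := sphere (0:(EuclideanSpace ℝ (Fin 3))) 1 with hS
  have hSc : IsCompact S := isCompact_sphere _ _
  let U : Set ℝ := Set.Ioo (-(δ + r)) (δ + r)
  have hU : IsOpen U := isOpen_Ioo
  have hmem : ∀ s ∈ U, ∀ y ∈ S, x + s • y ∈ D := by
    intro s hs y hy
    apply hδD
    rw [mem_ball_iff_norm, add_sub_cancel_left, norm_smul, mem_sphere_zero_iff_norm.1 hy, mul_one]
    exact abs_lt.2 hs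
  have hIU : ∀ s ∈ Set.Icc 0 r, s ∈ U := fun s hs =>
    ⟨by linarith [hs.1], by linarith [hs.2]⟩
  have hDu : ContDiffOn ℝ 1 (fderiv ℝ u) D := hu_C2.fderiv_of_isOpen hD_open (by norm_num)
  have hD2 : ContinuousOn (fderiv ℝ (fderiv ℝ u)) D :=
    hDu.continuousOn_fderiv_of_isOpen hD_open le_rfl
  have hcm : Continuous fun p : ℝ × (EuclideanSpace ℝ (Fin 3)) => x + p.1 • p.2 := by fun_prop
  have hmaps : Set.MapsTo (fun p : ℝ × (EuclideanSpace ℝ (Fin 3)) => x + p.1 • p.2) (U ×ˢ S) D :=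
    fun p hp => hmem p.1 hp.1 p.2 hp.2
  have c0 : ContinuousOn (fun p : ℝ × (EuclideanSpace ℝ (Fin 3)) => u (x + p.1 • p.2)) (U ×ˢ S) :=
    hu_C2.continuousOn.comp hcm.continuousOn hmaps
  have c1 : ContinuousOn (fun p : ℝ × (EuclideanSpace ℝ (Fin 3)) => fderiv ℝ u (x + p.1 • p.2)) (U ×ˢ S) :=
    hDu.continuousOn.comp hcm.continuousOn hmaps
  have c2 : ContinuousOn (fun p : ℝ × (EuclideanSpace ℝ (Fin 3)) => fderiv ℝ (fderiv ℝ u) (x + p.1 • p.2)) (U ×ˢ S) :=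
    hD2.comp hcm.continuousOn hmaps
  have c1' : ContinuousOn (fun p : ℝ × (EuclideanSpace ℝ (Fin 3)) => fderiv ℝ u (x + p.1 • p.2) p.2) (U ×ˢ S) :=
    c1.clm_apply continuousOn_snd
  have c2' : ContinuousOn (fun p : ℝ × (EuclideanSpace ℝ (Fin 3)) => fderiv ℝ (fderiv ℝ u) (x + p.1 • p.2) p.2 p.2)
      (U ×ˢ S) :=
    (c2.clm_apply continuousOn_snd).clm_apply continuousOn_snd
  have d1 : ∀ z ∈ D, HasFDerivAt u (fderiv ℝ u z) z := fun z hz =>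
    ((hu_C2.differentiableOn two_ne_zero).differentiableAt (hD_open.mem_nhds hz)).hasFDerivAt
  have d2 : ∀ z ∈ D, HasFDerivAt (fderiv ℝ u) (fderiv ℝ (fderiv ℝ u) z) z := fun z hz =>
    ((hDu.differentiableOn one_ne_zero).differentiableAt (hD_open.mem_nhds hz)).hasFDerivAt
  have dl : ∀ (y : (EuclideanSpace ℝ (Fin 3))) (s : ℝ), HasDerivAt (fun s : ℝ => x + s • y) y s := fun y s => by
    simpa using ((hasDerivAt_id s).smul_const y).const_add x
  let N : ℝ → ℝ := fun s => ∫ y in S, u (x + s • y) ∂μH[((3:ℕ):ℝ)-1]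
  let N1 : ℝ → ℝ := fun s => ∫ y in S, fderiv ℝ u (x + s • y) y ∂μH[((3:ℕ):ℝ)-1]
  let N2 : ℝ → ℝ := fun s =>
    ∫ y in S, fderiv ℝ (fderiv ℝ u) (x + s • y) y y ∂μH[((3:ℕ):ℝ)-1]
  have h1 : ∀ s ∈ U, HasDerivAt N (N1 s) s :=
    param_deriv μH[((3:ℕ):ℝ)-1] S hSc sphere_fin U hU (fun s y => u (x + s • y))
      (fun s y => fderiv ℝ u (x + s • y) y) c0 c1'
      (fun s hs y hy => (d1 _ (hmem s hs y hy)).comp_hasDerivAt s (dl y s))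
  have h2 : ∀ s ∈ U, HasDerivAt N1 (N2 s) s :=
    param_deriv μH[((3:ℕ):ℝ)-1] S hSc sphere_fin U hU (fun s y => fderiv ℝ u (x + s • y) y)
      (fun s y => fderiv ℝ (fderiv ℝ u) (x + s • y) y y) c1' c2'
      (fun s hs y hy => by
        have := ((d2 _ (hmem s hs y hy)).comp_hasDerivAt s (dl y s)).clm_apply
          (hasDerivAt_const s y)
        simpa using this)
  have hlap : ∀ z ∈ D, ∑ i : Fin 3, fderiv ℝ (fderiv ℝ u) z (EuclideanSpace.single i 1)
      (EuclideanSpace.single i 1) = μ ^ 2 * u z := by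
    intro z hz
    rw [← sub_eq_zero.1 (hu_pan z hz), laplacian]
    refine Finset.sum_congr rfl fun i _ => ?_
    have := (d2 z hz).clm_apply (hasFDerivAt_const (EuclideanSpace.single i (1:ℝ)) z)
    rw [this.fderiv]
    simp
  have hint : ∀ s ∈ U, ∀ G : ℝ × (EuclideanSpace ℝ (Fin 3)) → ℝ, ContinuousOn G (U ×ˢ S) →
      IntegrableOn (fun y => G (s, y)) S μH[((3:ℕ):ℝ)-1] := by
    intro s hs G hG
    have : ContinuousOn (fun y => G (s, y)) S :=
      hG.comp (f := fun y => (s, y)) (by fun_prop) (fun y hy => ⟨hs, hy⟩)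
    exact this.integrableOn_of_subset_isCompact hSc hSc.measurableSet subset_rfl sphere_fin
  have hrot : ∀ s ∈ U, ∀ i j : Fin 3, i ≠ j →
      IntegrableOn (fun y => s * fderiv ℝ (fderiv ℝ u) (x + s • y) (Jgen i j y) (Jgen i j y) +
        fderiv ℝ u (x + s • y) (Jgen i j (Jgen i j y))) S μH[((3:ℕ):ℝ)-1] ∧
      ∫ y in S, (s * fderiv ℝ (fderiv ℝ u) (x + s • y) (Jgen i j y) (Jgen i j y) +
        fderiv ℝ u (x + s • y) (Jgen i j (Jgen i j y))) ∂μH[((3:ℕ):ℝ)-1] = 0 := by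
    intro s hs i j hij
    constructor
    · refine hint s hs (fun p => p.1 * fderiv ℝ (fderiv ℝ u) (x + p.1 • p.2) (Jgen i j p.2)
        (Jgen i j p.2) + fderiv ℝ u (x + p.1 • p.2) (Jgen i j (Jgen i j p.2))) ?_
      have cJ : ContinuousOn (fun p : ℝ × (EuclideanSpace ℝ (Fin 3)) => Jgen i j p.2) (U ×ˢ S) := by fun_prop
      have cJJ : ContinuousOn (fun p : ℝ × (EuclideanSpace ℝ (Fin 3)) => Jgen i j (Jgen i j p.2)) (U ×ˢ S) := by fun_prop
      exact (continuousOn_fst.mul ((c2.clm_apply cJ).clm_apply cJ)).add (c1.clm_apply cJJ)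
    · have hl : ContDiff ℝ 1 (fun y : (EuclideanSpace ℝ (Fin 3)) => x + s • y) := by fun_prop
      have hV : IsOpen ((fun y : (EuclideanSpace ℝ (Fin 3)) => x + s • y) ⁻¹' D) := hD_open.preimage hl.continuous
      have key := Rot_deriv_integral i j hij _ hV (fun y hy => hmem s hs y hy)
        (fun y => fderiv ℝ u (x + s • y) (Jgen i j y))
        ((hDu.comp hl.contDiffOn (fun y hy => hy)).clm_apply (Jgen i j).contDiff.contDiffOn)
      rw [← key]
      refine setIntegral_congr_fun hSc.measurableSet fun y hy => ?_
      have hl' : HasFDerivAt (fun y : (EuclideanSpace ℝ (Fin 3)) => x + s • y) (s • ContinuousLinearMap.id ℝ (EuclideanSpace ℝ (Fin 3))) y :=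
        ((hasFDerivAt_id y).const_smul s).const_add x
      have := (HasFDerivAt.comp y (d2 _ (hmem s hs y hy)) hl').clm_apply (Jgen i j).hasFDerivAt
      have h3 := this.fderiv
      simp only [Function.comp_def] at h3
      beta_reduce
      rw [h3]
      simp
      ring
  have hode : ∀ s ∈ U, s * N2 s + 2 * N1 s = μ ^ 2 * (s * N s) := by
    intro s hs
    obtain ⟨i1, e1⟩ := hrot s hs 0 1 (by decide)
    obtain ⟨i2, e2⟩ := hrot s hs 0 2 (by decide)
    obtain ⟨i3, e3⟩ := hrot s hs 1 2 (by decide)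
    have hsum := integral_add (i1.add i2) i3
    simp only [Pi.add_apply] at hsum
    rw [integral_add i1 i2, e1, e2, e3] at hsum
    have hI : ∫ y in S, (s * (μ ^ 2 * u (x + s • y)) -
        s * fderiv ℝ (fderiv ℝ u) (x + s • y) y y - 2 * fderiv ℝ u (x + s • y) y)
          ∂μH[((3:ℕ):ℝ)-1] = 0 := by
      refine Eq.trans (setIntegral_congr_fun hSc.measurableSet fun y hy => ?_)
        (hsum.trans (by norm_num))
      have := Jgen_identity (fderiv ℝ (fderiv ℝ u) (x + s • y)) (fderiv ℝ u (x + s • y)) s y hy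
      rw [hlap _ (hmem s hs y hy)] at this
      exact this.symm
    have j0 := ((hint s hs _ c0).const_mul (μ ^ 2)).const_mul s
    have j1 := (hint s hs _ c1').const_mul 2
    have j2 := (hint s hs _ c2').const_mul s
    have k := integral_sub (j0.sub j2) j1
    simp only [Pi.sub_apply] at k
    rw [integral_sub j0 j2, hI] at k
    replace hI := k.symm
    simp only [integral_const_mul] at hI
    change s * (μ ^ 2 * N s) - s * N2 s - 2 * N1 s = 0 at hI
    linarith
  have hfin := ode_solve μ r hr N N1 N2 (fun s hs => h1 s (hIU s hs)) (fun s hs => h2 s (hIU s hs))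
    (fun s hs => hode s (hIU s hs))
  have hN0 : N 0 = (μH[((3:ℕ):ℝ)-1] : Measure (EuclideanSpace ℝ (Fin 3))).real S * u x := by
    simp [N]
  have hc : (μH[((3:ℕ):ℝ)-1] : Measure (EuclideanSpace ℝ (Fin 3))).real S ≠ 0 :=
    (ENNReal.toReal_pos sphere_pos sphere_fin).ne'
  have : sphereMean 3 u x r = ((μH[((3:ℕ):ℝ)-1] : Measure (EuclideanSpace ℝ (Fin 3))).real S)⁻¹ * N r := by
    rw [sphereMean, setAverage_eq, smul_eq_mul]
  rw [this]
  rw [hN0] at hfin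
  have hr' := hr.ne'
  field_simp
  linarith
end

section
/- (Duffin) Let D be a domain in ℝ² and let u ∈ C²(D) satisfy the modified Helmholtz (Yukawa) equation ∇²u − μ²u = 0 in D for some μ ≠ 0. Then for every x ∈ D and every r > 0 such that the closed ball of radius r centred at x is contained in D, the spherical (circular) mean satisfies M(x, r, u) = u(x) · (1/π) ∫_0^π cosh(μr cos θ) dθ, i.e. M(x, r, u) = I_0(μr) u(x) where I_0 is the modified Bessel function of order zero. -/
open MeasureTheory Metric

open Filter Topology

/-- The unit vector at angle `θ`. -/
noncomputable def ang (θ : ℝ) : EuclideanSpace ℝ (Fin 2) :=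
  Real.cos θ • EuclideanSpace.single 0 1 + Real.sin θ • EuclideanSpace.single 1 1

/-- The unit vector at angle `θ + π/2`. -/
noncomputable def ang' (θ : ℝ) : EuclideanSpace ℝ (Fin 2) :=
  (-Real.sin θ) • EuclideanSpace.single 0 1 + Real.cos θ • EuclideanSpace.single 1 1

lemma ang_eq (θ : ℝ) : ang θ = Complex.orthonormalBasisOneI.repr (circleMap 0 1 θ) := by
  ext i
  have := congrFun (Complex.orthonormalBasisOneI_repr_apply (circleMap 0 1 θ)) i
  rw [this]
  fin_cases i <;> simp [ang, circleMap, Complex.exp_ofReal_mul_I_re, Complex.exp_ofReal_mul_I_im]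

lemma norm_ang (θ : ℝ) : ‖ang θ‖ = 1 := by
  rw [ang_eq]; simp

lemma continuous_ang : Continuous ang := by unfold ang; fun_prop

lemma ang_surj (y : EuclideanSpace ℝ (Fin 2)) (hy : y ∈ sphere (0 : EuclideanSpace ℝ (Fin 2)) 1) :
    ∃ θ ∈ Set.Ioc (-Real.pi) Real.pi, ang θ = y := by
  have hn : ‖Complex.orthonormalBasisOneI.repr.symm y‖ = 1 := by
    rw [LinearIsometryEquiv.norm_map]; simpa using hy
  refine ⟨Complex.arg (Complex.orthonormalBasisOneI.repr.symm y), Complex.arg_mem_Ioc _, ?_⟩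
  rw [ang_eq, ← LinearIsometryEquiv.eq_symm_apply]
  have := Complex.norm_mul_exp_arg_mul_I (Complex.orthonormalBasisOneI.repr.symm y)
  rw [hn] at this
  simpa [circleMap] using this

lemma hausdorff_sphere_lt_top :
    μH[1] (sphere (0 : EuclideanSpace ℝ (Fin 2)) 1) < ⊤ := by
  have hsub : sphere (0 : EuclideanSpace ℝ (Fin 2)) 1 ⊆ ang '' (Set.Icc (-Real.pi) Real.pi) := by
    intro y hy
    obtain ⟨θ, h, rfl⟩ := ang_surj y hy
    exact ⟨θ, Set.Ioc_subset_Icc_self h, rfl⟩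
  have hL : LipschitzWith (1 * Real.nnabs 1) ang := by
    have := (Complex.orthonormalBasisOneI.repr.lipschitz).comp (lipschitzWith_circleMap 0 1)
    have he : ang = Complex.orthonormalBasisOneI.repr ∘ circleMap 0 1 := funext ang_eq
    rw [he]
    exact this
  refine (measure_mono hsub).trans_lt ((hL.hausdorffMeasure_image_le zero_le_one _).trans_lt ?_)
  simp

lemma hausdorff_sphere_pos :
    0 < μH[1] (sphere (0 : EuclideanSpace ℝ (Fin 2)) 1) := by
  have hL : LipschitzWith 1 (fun y : EuclideanSpace ℝ (Fin 2) => y 0) := by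
    refine LipschitzWith.of_dist_le_mul fun x y => ?_
    have := PiLp.norm_apply_le (x - y) 0
    simpa [dist_eq_norm] using this
  have h1 := hL.hausdorffMeasure_image_le zero_le_one (sphere (0 : EuclideanSpace ℝ (Fin 2)) 1)
  have hsub : Set.Icc (-1 : ℝ) 1 ⊆
      (fun y : EuclideanSpace ℝ (Fin 2) => y 0) '' sphere (0 : EuclideanSpace ℝ (Fin 2)) 1 := by
    intro t ht
    refine ⟨ang (Real.arccos t), by simp [norm_ang], ?_⟩
    simp [ang, Real.cos_arccos ht.1 ht.2]
  have h2 := measure_mono (μ := (volume : Measure ℝ)) hsub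
  rw [hausdorffMeasure_real] at h1
  have h3 := h2.trans h1
  simp only [Real.volume_Icc] at h3
  refine lt_of_lt_of_le ?_ (h3.trans (by simp))
  norm_num

/-- rotation -/
noncomputable def rotE (θ : ℝ) : EuclideanSpace ℝ (Fin 2) ≃ₗᵢ[ℝ] EuclideanSpace ℝ (Fin 2) :=
  (Complex.orthonormalBasisOneI.repr.symm.trans (rotation (Circle.exp θ))).trans
    Complex.orthonormalBasisOneI.repr

lemma rotE_ang (θ φ : ℝ) : rotE θ (ang φ) = ang (θ + φ) := by
  simp [rotE, ang_eq, circleMap, add_mul, Complex.exp_add]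

lemma rotE_eq (θ : ℝ) (y : EuclideanSpace ℝ (Fin 2)) :
    rotE θ y = y 0 • ang θ + y 1 • ang' θ := by
  have hy : y = y 0 • ang 0 + y 1 • ang (Real.pi / 2) := by
    ext i; fin_cases i <;> simp [ang]
  conv_lhs => rw [hy]
  rw [map_add, map_smul, map_smul, rotE_ang, rotE_ang]
  simp [ang, ang', Real.cos_add, Real.sin_add]

lemma ang_periodic : Function.Periodic ang (2 * Real.pi) := by
  intro θ; simp [ang]

lemma avg_bcf (g : BoundedContinuousFunction (EuclideanSpace ℝ (Fin 2)) ℝ) :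
    (2 * Real.pi) * ∫ y in sphere (0 : EuclideanSpace ℝ (Fin 2)) 1, g y ∂μH[1] =
      (μH[1] : Measure (EuclideanSpace ℝ (Fin 2))).real (sphere 0 1) *
        ∫ θ in (0 : ℝ)..(2 * Real.pi), g (ang θ) := by
  set ν : Measure (EuclideanSpace ℝ (Fin 2)) := μH[1].restrict (sphere 0 1) with hν
  haveI : IsFiniteMeasure ν := ⟨by simpa [hν] using hausdorff_sphere_lt_top⟩
  have hrot : ∀ θ : ℝ, ∫ y, g (rotE θ y) ∂ν = ∫ y, g y ∂ν := by
    intro θ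
    have hmp := (rotE θ).toIsometryEquiv.measurePreserving_hausdorffMeasure 1
    have := hmp.setIntegral_preimage_emb
      (rotE θ).toIsometryEquiv.toHomeomorph.measurableEmbedding (fun y => g y) (sphere 0 1)
    rw [hν, ← this]
    congr 2
    ext y; simp
  have hswap : ∫ θ in (0 : ℝ)..(2 * Real.pi), ∫ y, g (rotE θ y) ∂ν =
      ∫ y, (∫ θ in (0 : ℝ)..(2 * Real.pi), g (rotE θ y)) ∂ν := by
    apply intervalIntegral_integral_swap
    have hc : Continuous (fun p : ℝ × EuclideanSpace ℝ (Fin 2) => g (rotE p.1 p.2)) := by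
      simp only [rotE_eq, ang, ang']
      fun_prop
    haveI : IsFiniteMeasure ((volume : Measure ℝ).restrict (Set.uIoc 0 (2 * Real.pi))) :=
      ⟨by simp [Set.uIoc]⟩
    refine Integrable.of_bound hc.aestronglyMeasurable ‖g‖ (ae_of_all _ fun p => g.norm_coe_le_norm _)
  have hin : ∀ y ∈ sphere (0 : EuclideanSpace ℝ (Fin 2)) 1,
      (∫ θ in (0 : ℝ)..(2 * Real.pi), g (rotE θ y)) =
        ∫ θ in (0 : ℝ)..(2 * Real.pi), g (ang θ) := by
    intro y hy
    obtain ⟨φ, -, rfl⟩ := ang_surj y hy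
    simp only [rotE_ang]
    rw [intervalIntegral.integral_comp_add_right (fun t => g (ang t)) φ]
    have hp : Function.Periodic (fun t => g (ang t)) (2 * Real.pi) := fun t => by
      simp only [ang_periodic t]
    have := hp.intervalIntegral_add_eq φ 0
    simpa [add_comm] using this
  simp only [hrot] at hswap
  rw [hν, setIntegral_congr_fun isClosed_sphere.measurableSet hin] at hswap
  simpa using hswap

lemma avg_sphere (g : EuclideanSpace ℝ (Fin 2) → ℝ) (hg : ContinuousOn g (sphere 0 1)) :
    ⨍ y in sphere (0 : EuclideanSpace ℝ (Fin 2)) 1, g y ∂μH[1] =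
      (1 / (2 * Real.pi)) * ∫ θ in (0 : ℝ)..(2 * Real.pi), g (ang θ) := by
  haveI : CompactSpace (sphere (0 : EuclideanSpace ℝ (Fin 2)) 1) :=
    isCompact_iff_compactSpace.mp (isCompact_sphere _ _)
  let f : C(sphere (0 : EuclideanSpace ℝ (Fin 2)) 1, ℝ) :=
    ⟨_, continuousOn_iff_continuous_restrict.mp hg⟩
  obtain ⟨G, -, hG⟩ := BoundedContinuousFunction.exists_extension_norm_eq_of_isClosedEmbedding
    (BoundedContinuousFunction.mkOfCompact f)
    (isClosed_sphere.isClosedEmbedding_subtypeVal)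
  have hGg : ∀ y ∈ sphere (0 : EuclideanSpace ℝ (Fin 2)) 1, G y = g y := by
    intro y hy
    exact congrFun hG ⟨y, hy⟩
  have h := avg_bcf G
  rw [setIntegral_congr_fun isClosed_sphere.measurableSet hGg] at h
  have hθ : ∀ θ, G (ang θ) = g (ang θ) := fun θ => hGg _ (by simp [norm_ang])
  simp only [hθ] at h
  rw [setAverage_eq, smul_eq_mul]
  have hpos : 0 < (μH[1] : Measure (EuclideanSpace ℝ (Fin 2))).real (sphere 0 1) :=
    ENNReal.toReal_pos hausdorff_sphere_pos.ne' hausdorff_sphere_lt_top.ne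
  have := Real.pi_pos
  field_simp
  linarith

lemma deriv_under {F F' : ℝ → ℝ → ℝ} {R : ℝ}
    (hF : ContinuousOn (fun p : ℝ × ℝ => F p.1 p.2) (Set.Ioo (-R) R ×ˢ Set.univ))
    (hF' : ContinuousOn (fun p : ℝ × ℝ => F' p.1 p.2) (Set.Ioo (-R) R ×ˢ Set.univ))
    (hd : ∀ ρ ∈ Set.Ioo (-R) R, ∀ θ, HasDerivAt (fun s => F s θ) (F' ρ θ) ρ)
    (ρ : ℝ) (hρ : ρ ∈ Set.Ioo (-R) R) :
    HasDerivAt (fun s => ∫ θ in (0 : ℝ)..(2 * Real.pi), F s θ)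
      (∫ θ in (0 : ℝ)..(2 * Real.pi), F' ρ θ) ρ := by
  have sec : ∀ {G : ℝ → ℝ → ℝ},
      ContinuousOn (fun p : ℝ × ℝ => G p.1 p.2) (Set.Ioo (-R) R ×ˢ Set.univ) →
      ∀ s ∈ Set.Ioo (-R) R, Continuous (G s) := by
    intro G hG s hs
    have : Continuous (fun θ : ℝ => (s, θ)) := by fun_prop
    exact hG.comp_continuous this (fun θ => ⟨hs, trivial⟩)
  obtain ⟨δ, hδ, hsub⟩ := Metric.nhds_basis_closedBall.mem_iff.mp (isOpen_Ioo.mem_nhds hρ)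
  have hK : IsCompact (closedBall ρ δ ×ˢ Set.uIcc (0 : ℝ) (2 * Real.pi)) :=
    (isCompact_closedBall _ _).prod isCompact_uIcc
  obtain ⟨C, hC⟩ := hK.exists_bound_of_continuousOn
    (hF'.mono (Set.prod_mono hsub (Set.subset_univ _)))
  refine (intervalIntegral.hasDerivAt_integral_of_dominated_loc_of_deriv_le
    (bound := fun _ => C) (closedBall_mem_nhds ρ hδ) ?_ ?_ ?_ ?_ ?_ ?_).2
  · filter_upwards [isOpen_Ioo.mem_nhds hρ] with s hs
    exact (sec hF s hs).aestronglyMeasurable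
  · exact (sec hF ρ hρ).intervalIntegrable _ _
  · exact (sec hF' ρ hρ).aestronglyMeasurable
  · exact ae_of_all _ fun t ht s hs => hC (s, t) ⟨hs, Set.uIoc_subset_uIcc ht⟩
  · exact intervalIntegrable_const
  · exact ae_of_all _ fun t _ s hs => hd s (hsub hs) t

lemma hasDerivAt_ang (θ : ℝ) : HasDerivAt ang (ang' θ) θ := by
  unfold ang ang'
  exact ((Real.hasDerivAt_cos θ).smul_const _).add ((Real.hasDerivAt_sin θ).smul_const _)

lemma hasDerivAt_ang' (θ : ℝ) : HasDerivAt ang' (-ang θ) θ := by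
  have : -ang θ = (-Real.cos θ) • EuclideanSpace.single 0 1 +
      (-Real.sin θ) • EuclideanSpace.single 1 1 := by
    unfold ang; module
  rw [this]
  unfold ang'
  exact ((Real.hasDerivAt_sin θ).neg.smul_const _).add ((Real.hasDerivAt_cos θ).smul_const _)

lemma continuous_ang' : Continuous ang' := by unfold ang'; fun_prop

lemma laplacian_eq (w : EuclideanSpace ℝ (Fin 2) → ℝ) (y : EuclideanSpace ℝ (Fin 2))
    (h : DifferentiableAt ℝ (fderiv ℝ w) y) (θ : ℝ) :
    laplacian 2 w y = fderiv ℝ (fderiv ℝ w) y (ang θ) (ang θ)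
      + fderiv ℝ (fderiv ℝ w) y (ang' θ) (ang' θ) := by
  have h1 : ∀ v, fderiv ℝ (fun y => fderiv ℝ w y v) y v = fderiv ℝ (fderiv ℝ w) y v v := by
    intro v
    rw [fderiv_clm_apply h (by fun_prop)]
    simp
  unfold laplacian
  simp only [Fin.sum_univ_two, h1, ang, ang', map_add, map_smul, ContinuousLinearMap.add_apply,
    ContinuousLinearMap.smul_apply, smul_eq_mul]
  linear_combination (-(fderiv ℝ (fderiv ℝ w) y (EuclideanSpace.single 0 1) (EuclideanSpace.single 0 1))
    - (fderiv ℝ (fderiv ℝ w) y (EuclideanSpace.single 1 1) (EuclideanSpace.single 1 1)))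
      * Real.sin_sq_add_cos_sq θ

lemma mean_zero (x : EuclideanSpace ℝ (Fin 2)) (R : ℝ)
    (w : EuclideanSpace ℝ (Fin 2) → ℝ) (hw : ContDiffOn ℝ 2 w (ball x R)) (μ : ℝ)
    (hpan : ∀ y ∈ ball x R, laplacian 2 w y - μ ^ 2 * w y = 0) (hx : w x = 0)
    (r : ℝ) (hr : 0 < r) (hrR : r < R) :
    ∫ θ in (0 : ℝ)..(2 * Real.pi), w (x + r • ang θ) = 0 := by
  have hmem : ∀ s ∈ Set.Ioo (-R) R, ∀ θ, x + s • ang θ ∈ ball x R := by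
    intro s hs θ
    simpa [norm_smul, norm_ang, abs_lt] using hs
  have hw1 : ContDiffOn ℝ 1 (fderiv ℝ w) (ball x R) :=
    hw.fderiv_of_isOpen isOpen_ball (by norm_num)
  have hw2 : ContinuousOn (fderiv ℝ (fderiv ℝ w)) (ball x R) :=
    hw1.continuousOn_fderiv_of_isOpen isOpen_ball le_rfl
  have d1 : ∀ y ∈ ball x R, HasFDerivAt w (fderiv ℝ w y) y := fun y hy =>
    ((hw.contDiffAt (isOpen_ball.mem_nhds hy)).differentiableAt (by norm_num)).hasFDerivAt
  have d2 : ∀ y ∈ ball x R, HasFDerivAt (fderiv ℝ w) (fderiv ℝ (fderiv ℝ w) y) y := fun y hy =>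
    ((hw1.contDiffAt (isOpen_ball.mem_nhds hy)).differentiableAt (by norm_num)).hasFDerivAt
  have hpath : ∀ s θ, HasDerivAt (fun s : ℝ => x + s • ang θ) (ang θ) s := by
    intro s θ
    simpa using ((hasDerivAt_id s).smul_const (ang θ)).const_add x
  have hpathθ : ∀ s θ : ℝ, HasDerivAt (fun θ : ℝ => x + s • ang θ) (s • ang' θ) θ := by
    intro s θ
    exact ((hasDerivAt_ang θ).const_smul s).const_add x
  have hmap : Set.MapsTo (fun p : ℝ × ℝ => x + p.1 • ang p.2) (Set.Ioo (-R) R ×ˢ Set.univ)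
      (ball x R) := fun p hp => hmem p.1 hp.1 p.2
  have hpc : Continuous (fun p : ℝ × ℝ => x + p.1 • ang p.2) := by
    have := continuous_ang
    fun_prop
  have hac : ContinuousOn (fun p : ℝ × ℝ => ang p.2) (Set.Ioo (-R) R ×ˢ Set.univ) :=
    (continuous_ang.comp continuous_snd).continuousOn
  have hac' : ContinuousOn (fun p : ℝ × ℝ => ang' p.2) (Set.Ioo (-R) R ×ˢ Set.univ) :=
    (continuous_ang'.comp continuous_snd).continuousOn
  have c0 := hw.continuousOn.comp hpc.continuousOn hmap
  have c1 := (hw1.continuousOn.comp hpc.continuousOn hmap)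
  have c2 := (hw2.comp hpc.continuousOn hmap)
  have sec : ∀ {G : ℝ → ℝ → ℝ},
      ContinuousOn (fun p : ℝ × ℝ => G p.1 p.2) (Set.Ioo (-R) R ×ˢ Set.univ) →
      ∀ s ∈ Set.Ioo (-R) R, Continuous (G s) := by
    intro G hG s hs
    have : Continuous (fun θ : ℝ => (s, θ)) := by fun_prop
    exact hG.comp_continuous this (fun θ => ⟨hs, trivial⟩)
  set A : ℝ → ℝ := fun s => ∫ θ in (0 : ℝ)..(2 * Real.pi), w (x + s • ang θ) with hA
  set A1 : ℝ → ℝ := fun s => ∫ θ in (0 : ℝ)..(2 * Real.pi), fderiv ℝ w (x + s • ang θ) (ang θ)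
    with hA1
  set A2 : ℝ → ℝ := fun s => ∫ θ in (0 : ℝ)..(2 * Real.pi),
    fderiv ℝ (fderiv ℝ w) (x + s • ang θ) (ang θ) (ang θ) with hA2
  have C1 : ContinuousOn (fun p : ℝ × ℝ => fderiv ℝ w (x + p.1 • ang p.2) (ang p.2))
    (Set.Ioo (-R) R ×ˢ Set.univ) := c1.clm_apply hac
  have C2 : ContinuousOn (fun p : ℝ × ℝ =>
      fderiv ℝ (fderiv ℝ w) (x + p.1 • ang p.2) (ang p.2) (ang p.2))
    (Set.Ioo (-R) R ×ˢ Set.univ) := (c2.clm_apply hac).clm_apply hac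
  have C2' : ContinuousOn (fun p : ℝ × ℝ =>
      fderiv ℝ (fderiv ℝ w) (x + p.1 • ang p.2) (ang' p.2) (ang' p.2))
    (Set.Ioo (-R) R ×ˢ Set.univ) := (c2.clm_apply hac').clm_apply hac'
  have hdA : ∀ s ∈ Set.Ioo (-R) R, HasDerivAt A (A1 s) s := by
    refine deriv_under c0 C1 ?_
    intro s hs θ
    exact (d1 _ (hmem s hs θ)).comp_hasDerivAt s (hpath s θ)
  have hdA1 : ∀ s ∈ Set.Ioo (-R) R, HasDerivAt A1 (A2 s) s := by
    refine deriv_under C1 C2 ?_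
    intro s hs θ
    have h := (d2 _ (hmem s hs θ)).comp_hasDerivAt s (hpath s θ)
    simpa using h.clm_apply (hasDerivAt_const s (ang θ))
  have hode : ∀ s ∈ Set.Ioo (-R) R, s * A2 s + A1 s = s * (μ ^ 2 * A s) := by
    intro s hs
    have k1 : Continuous (fun θ => fderiv ℝ w (x + s • ang θ) (ang θ)) :=
      sec (G := fun s θ => fderiv ℝ w (x + s • ang θ) (ang θ)) C1 s hs
    have k2 : Continuous (fun θ => fderiv ℝ (fderiv ℝ w) (x + s • ang θ) (ang θ) (ang θ)) :=
      sec (G := fun s θ => fderiv ℝ (fderiv ℝ w) (x + s • ang θ) (ang θ) (ang θ)) C2 s hs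
    have k2' : Continuous (fun θ => fderiv ℝ (fderiv ℝ w) (x + s • ang θ) (ang' θ) (ang' θ)) :=
      sec (G := fun s θ => fderiv ℝ (fderiv ℝ w) (x + s • ang θ) (ang' θ) (ang' θ)) C2' s hs
    have hz : ∫ θ in (0 : ℝ)..(2 * Real.pi),
        (s * fderiv ℝ (fderiv ℝ w) (x + s • ang θ) (ang' θ) (ang' θ)
          - fderiv ℝ w (x + s • ang θ) (ang θ)) = 0 := by
      have hd : ∀ θ, HasDerivAt (fun θ => fderiv ℝ w (x + s • ang θ) (ang' θ))
          (s * fderiv ℝ (fderiv ℝ w) (x + s • ang θ) (ang' θ) (ang' θ)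
          - fderiv ℝ w (x + s • ang θ) (ang θ)) θ := by
        intro θ
        have h := (d2 _ (hmem s hs θ)).comp_hasDerivAt θ (hpathθ s θ)
        have h' := h.clm_apply (hasDerivAt_ang' θ)
        refine h'.congr_deriv ?_
        simp [sub_eq_add_neg]
      rw [intervalIntegral.integral_eq_sub_of_hasDerivAt (fun θ _ => hd θ)
        (((k2'.const_mul s).sub k1).intervalIntegrable _ _)]
      simp [ang, ang']
    rw [intervalIntegral.integral_sub ((k2'.const_mul s).intervalIntegrable _ _)
      (k1.intervalIntegrable _ _), intervalIntegral.integral_const_mul] at hz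
    have hl : A2 s + ∫ θ in (0 : ℝ)..(2 * Real.pi),
        fderiv ℝ (fderiv ℝ w) (x + s • ang θ) (ang' θ) (ang' θ) = μ ^ 2 * A s := by
      rw [hA2, hA]
      simp only
      rw [← intervalIntegral.integral_add (k2.intervalIntegrable _ _)
        (k2'.intervalIntegrable _ _), ← intervalIntegral.integral_const_mul]
      refine intervalIntegral.integral_congr fun θ _ => ?_
      have := hpan _ (hmem s hs θ)
      rw [laplacian_eq w _ (d2 _ (hmem s hs θ)).differentiableAt θ] at this
      linarith
    rw [← hl]
    simp only [hA1] at hz ⊢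
    linarith
  have h00 : A 0 = 0 := by simp [hA, hx]
  have h10 : A1 0 = 0 := by
    have := hode 0 ⟨by linarith, by linarith⟩
    simpa using this
  have hIcc : ∀ s ∈ Set.Icc 0 r, s ∈ Set.Ioo (-R) R := fun s hs =>
    ⟨by linarith [hs.1], by linarith [hs.2]⟩
  have hE : ∀ s ∈ Set.Ioo (-R) R, HasDerivAt (fun s => A1 s ^ 2 - μ ^ 2 * A s ^ 2)
      (2 * A1 s * (A2 s - μ ^ 2 * A s)) s := by
    intro s hs
    have h := ((hdA1 s hs).pow 2).sub (((hdA s hs).pow 2).const_mul (μ ^ 2))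
    refine h.congr_deriv ?_
    push_cast
    ring
  have hanti : AntitoneOn (fun s => A1 s ^ 2 - μ ^ 2 * A s ^ 2) (Set.Icc 0 r) := by
    refine antitoneOn_of_deriv_nonpos (convex_Icc _ _)
      (fun s hs => (hE s (hIcc s hs)).continuousAt.continuousWithinAt) ?_ ?_
    · intro s hs
      exact (hE s (hIcc s (interior_subset hs))).differentiableAt.differentiableWithinAt
    · intro s hs
      have hs' := hIcc s (interior_subset hs)
      rw [interior_Icc] at hs
      rw [(hE s hs').deriv]
      have ho := hode s hs'
      have : A2 s - μ ^ 2 * A s = - A1 s / s := by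
        rw [eq_div_iff hs.1.ne']; linarith
      rw [this]
      have h2 : 2 * A1 s * (-A1 s / s) = -(2 * (A1 s ^ 2 / s)) := by ring
      rw [h2]
      have : 0 ≤ A1 s ^ 2 / s := div_nonneg (sq_nonneg _) hs.1.le
      linarith
  refine eq_zero_of_abs_deriv_le_mul_abs_self_of_eq_zero_right (f := A) (f' := A1) (K := |μ|)
    (a := 0) (b := r) (fun s hs => (hdA s (hIcc s hs)).continuousAt.continuousWithinAt)
    (fun s hs => (hdA s (hIcc s (Set.Ico_subset_Icc_self hs))).hasDerivWithinAt) h00 ?_ r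
    ⟨hr.le, le_rfl⟩
  intro s hs
  have := hanti ⟨le_rfl, hr.le⟩ (Set.Ico_subset_Icc_self hs) hs.1
  simp only [h00, h10] at this
  rw [Real.norm_eq_abs, Real.norm_eq_abs, ← abs_mul]
  apply sq_le_sq.mp
  rw [mul_pow]
  linarith

lemma laplacian_cosh (μ c : ℝ) (y : EuclideanSpace ℝ (Fin 2)) :
    laplacian 2 (fun y => Real.cosh (μ * (y 0 - c))) y = μ ^ 2 * Real.cosh (μ * (y 0 - c)) := by
  have hp : ∀ y : EuclideanSpace ℝ (Fin 2),
      HasFDerivAt (fun y : EuclideanSpace ℝ (Fin 2) => μ * (y 0 - c))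
        (μ • (EuclideanSpace.proj 0 : EuclideanSpace ℝ (Fin 2) →L[ℝ] ℝ)) y := by
    intro y
    exact ((EuclideanSpace.proj 0 : EuclideanSpace ℝ (Fin 2) →L[ℝ] ℝ).hasFDerivAt.sub_const
      c).const_mul μ
  have h1 : ∀ y v, fderiv ℝ (fun y : EuclideanSpace ℝ (Fin 2) => Real.cosh (μ * (y 0 - c))) y v
      = Real.sinh (μ * (y 0 - c)) * (μ * v 0) := by
    intro y v
    rw [(hp y).cosh.fderiv]
    simp
  have h2 : ∀ y v, fderiv ℝ (fun y : EuclideanSpace ℝ (Fin 2) =>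
      Real.sinh (μ * (y 0 - c)) * (μ * v 0)) y v
      = Real.cosh (μ * (y 0 - c)) * (μ * v 0) * (μ * v 0) := by
    intro y v
    rw [((hp y).sinh.mul_const _).fderiv]
    simp; ring
  unfold laplacian
  simp only [h1, h2, Fin.sum_univ_two]
  simp; ring

lemma laplacian_sub_const_mul (u v : EuclideanSpace ℝ (Fin 2) → ℝ) (k : ℝ)
    (D : Set (EuclideanSpace ℝ (Fin 2))) (hD : IsOpen D)
    (hu : ContDiffOn ℝ 2 u D) (hv : ContDiffOn ℝ 2 v D) (y : EuclideanSpace ℝ (Fin 2))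
    (hy : y ∈ D) :
    laplacian 2 (fun y => u y - k * v y) y = laplacian 2 u y - k * laplacian 2 v y := by
  have dd : ∀ {f : EuclideanSpace ℝ (Fin 2) → ℝ}, ContDiffOn ℝ 2 f D → ∀ z ∈ D,
      DifferentiableAt ℝ f z := fun hf z hz =>
    (hf.contDiffAt (hD.mem_nhds hz)).differentiableAt (by norm_num)
  have dd2 : ∀ {f : EuclideanSpace ℝ (Fin 2) → ℝ}, ContDiffOn ℝ 2 f D → ∀ z ∈ D, ∀ e,
      DifferentiableAt ℝ (fun y => fderiv ℝ f y e) z := fun {f} hf z hz e => by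
    have h1 : ContDiffOn ℝ 1 (fderiv ℝ f) D := hf.fderiv_of_isOpen hD (by norm_num)
    exact ((h1.contDiffAt (hD.mem_nhds hz)).differentiableAt (by norm_num)).clm_apply
      (differentiableAt_const e)
  have h1 : ∀ e, (fun z => fderiv ℝ (fun y => u y - k * v y) z e) =ᶠ[𝓝 y]
      (fun z => fderiv ℝ u z e - k * fderiv ℝ v z e) := by
    intro e
    filter_upwards [hD.mem_nhds hy] with z hz
    have h := ((dd hu z hz).hasFDerivAt.fun_sub ((dd hv z hz).hasFDerivAt.const_mul k)).fderiv
    rw [h]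
    simp
  unfold laplacian
  simp only [Fin.sum_univ_two, (h1 _).fderiv_eq]
  have h2 : ∀ e e', fderiv ℝ (fun z => fderiv ℝ u z e - k * fderiv ℝ v z e) y e'
      = fderiv ℝ (fun z => fderiv ℝ u z e) y e' - k * fderiv ℝ (fun z => fderiv ℝ v z e) y e' := by
    intro e e'
    rw [((dd2 hu y hy e).hasFDerivAt.fun_sub ((dd2 hv y hy e).hasFDerivAt.const_mul k)).fderiv]
    simp
  rw [h2, h2]; ring

lemma integral_cosh (a : ℝ) : ∫ θ in (0 : ℝ)..(2 * Real.pi), Real.cosh (a * Real.cos θ) =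
    2 * ∫ θ in (0 : ℝ)..Real.pi, Real.cosh (a * Real.cos θ) := by
  have hc : Continuous (fun θ => Real.cosh (a * Real.cos θ)) := by fun_prop
  rw [← intervalIntegral.integral_add_adjacent_intervals (hc.intervalIntegrable 0 Real.pi)
    (hc.intervalIntegrable Real.pi (2 * Real.pi))]
  have := intervalIntegral.integral_comp_add_right
    (a := 0) (b := Real.pi) (fun θ => Real.cosh (a * Real.cos θ)) Real.pi
  simp only [Real.cos_add_pi, mul_neg, Real.cosh_neg, zero_add, ← two_mul] at this
  rw [← this]; ring

/-- Duffin's mean value theorem: if `u` is panharmonic (`∇²u − μ²u = 0`) in a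
domain `D ⊆ ℝ²`, then the circular mean satisfies
`M(x, r, u) = u(x) · (1/π) ∫_0^π cosh(μ r cos θ) dθ = I₀(μr) u(x)`. -/
theorem stmt_11 (D : Set (EuclideanSpace ℝ (Fin 2)))
    (hD_open : IsOpen D) (hD_conn : IsConnected D)
    (u : EuclideanSpace ℝ (Fin 2) → ℝ)
    (hu_C2 : ContDiffOn ℝ 2 u D)
    (μ : ℝ) (hμ : μ ≠ 0)
    (hu_pan : ∀ x ∈ D, laplacian 2 u x - μ ^ 2 * u x = 0) :
    ∀ x ∈ D, ∀ r > (0 : ℝ), closedBall x r ⊆ D →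
      sphereMean 2 u x r =
        u x * ((1 / Real.pi) * ∫ θ in (0 : ℝ)..Real.pi, Real.cosh (μ * r * Real.cos θ)) := by
  intro x hx r hr hsub
  obtain ⟨δ, hδ, hthick⟩ := (isCompact_closedBall x r).exists_thickening_subset_open hD_open hsub
  have hball : ball x (r + δ) ⊆ D := by
    refine Set.Subset.trans ?_ hthick
    rw [thickening_closedBall hδ hr.le, add_comm]
  set v : EuclideanSpace ℝ (Fin 2) → ℝ := fun y => Real.cosh (μ * (y 0 - x 0)) with hv
  have hvC : ContDiff ℝ 2 v := by
    rw [hv]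
    refine Real.contDiff_cosh.comp ?_
    fun_prop
  have hz := mean_zero x (r + δ) (fun y => u y - u x * v y)
    ((hu_C2.mono hball).sub (contDiffOn_const.mul hvC.contDiffOn)) μ
    (fun y hy => by
      rw [laplacian_sub_const_mul u v (u x) D hD_open hu_C2 hvC.contDiffOn y (hball hy),
        hv, laplacian_cosh]
      linear_combination hu_pan y (hball hy))
    (by simp [hv]) r hr (by linarith)
  have hmem : ∀ y ∈ sphere (0 : EuclideanSpace ℝ (Fin 2)) 1, x + r • y ∈ D := by
    intro y hy
    apply hsub
    have : ‖y‖ = 1 := by simpa using hy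
    simp [norm_smul, this, abs_of_pos hr]
  have hcont : ContinuousOn (fun y => u (x + r • y)) (sphere 0 1) :=
    hu_C2.continuousOn.comp (by fun_prop) hmem
  have hcu : Continuous (fun θ => u (x + r • ang θ)) :=
    hcont.comp_continuous continuous_ang (fun θ => by simp [norm_ang])
  have hvv : ∀ θ, v (x + r • ang θ) = Real.cosh (μ * r * Real.cos θ) := by
    intro θ
    simp [hv, ang, mul_assoc]
  simp only [hvv] at hz
  rw [intervalIntegral.integral_sub (hcu.intervalIntegrable _ _)
    (Continuous.intervalIntegrable (by fun_prop) _ _), intervalIntegral.integral_const_mul,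
    integral_cosh] at hz
  have h1 : (((2 : ℕ) : ℝ) - 1) = 1 := by norm_num
  unfold sphereMean
  rw [h1, avg_sphere _ hcont, sub_eq_zero.mp hz]
  have := Real.pi_pos
  field_simp
end
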